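/- For every even n = 2k ≥ 8, there exists a set P of n points in the plane in general position such that every strictly convex quadrangulation of P (a decomposition of the convex hull of P into strictly convex quadrilaterals with vertex set containing P and no point of P interior to a cell) uses at least n/4 Steiner points (vertices not in P). -/

import Mathlib

open scoped BigOperators

/-- Points in the plane. -/
abbrev Pt := ℝ × ℝ

/-- 2×2 determinant (cross product) of two plane vectors. -/
noncomputable def det2 (p q : Pt) : ℝ := p.1 * q.2 - p.2 * q.1

/-- Open half-plane strictly to the left of the directed line from `p` to `q`. -/
def Lhp (p q : Pt) : Set Pt := {x | 0 < det2 (q - p) (x - p)}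

/-- Open half-plane strictly to the right of the directed line from `p` to `q`. -/
def Rhp (p q : Pt) : Set Pt := {x | det2 (q - p) (x - p) < 0}

/-- The boundary of the polygon with vertices `v 0, …, v (n-1)`:
the union of its (cyclically consecutive) edges. -/
def polyBoundary {n : ℕ} [NeZero n] (v : Fin n → Pt) : Set Pt :=
  ⋃ i : Fin n, segment ℝ (v i) (v (i + 1))

/-- `v` describes a simple polygon: at least 3 distinct vertices, and two distinct
edges may only meet at a common endpoint. -/
def IsSimplePolygon {n : ℕ} [NeZero n] (v : Fin n → Pt) : Prop :=
  3 ≤ n ∧ Function.Injective v ∧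
    ∀ i j : Fin n, i ≠ j →
      segment ℝ (v i) (v (i + 1)) ∩ segment ℝ (v j) (v (j + 1)) ⊆
        ({v i, v (i + 1)} ∩ {v j, v (j + 1)} : Set Pt)

/-- The interior of the polygon: the union of the bounded connected components of the
complement of the boundary. -/
def polyInterior {n : ℕ} [NeZero n] (v : Fin n → Pt) : Set Pt :=
  {x | x ∉ polyBoundary v ∧
    Bornology.IsBounded (connectedComponentIn (polyBoundary v)ᶜ x)}

/-- The (closed) polygonal region: interior together with boundary. -/
def polyRegion {n : ℕ} [NeZero n] (v : Fin n → Pt) : Set Pt :=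
  polyBoundary v ∪ polyInterior v

/-- Twice the signed area of the polygon. -/
noncomputable def signedArea2 {n : ℕ} [NeZero n] (v : Fin n → Pt) : ℝ :=
  ∑ i : Fin n, det2 (v i) (v (i + 1))

/-- The vertices are listed in counterclockwise order. -/
def IsCCW {n : ℕ} [NeZero n] (v : Fin n → Pt) : Prop := 0 < signedArea2 v

/-- The vertex `v i` of a counterclockwise polygon is strictly convex
(interior angle strictly less than 180°). -/
def StrictlyConvexAt {n : ℕ} [NeZero n] (v : Fin n → Pt) (i : Fin n) : Prop :=
  0 < det2 (v i - v (i - 1)) (v (i + 1) - v i)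

/-- The vertex `v i` of a counterclockwise polygon is reflex
(interior angle greater than or equal to 180°). -/
def ReflexAt {n : ℕ} [NeZero n] (v : Fin n → Pt) (i : Fin n) : Prop :=
  det2 (v i - v (i - 1)) (v (i + 1) - v i) ≤ 0

/-- The wedge of vertex `v i`:  `L(v⁻, v) ∩ R(v⁺, v) ∩ interior P`. -/
def Wedge {n : ℕ} [NeZero n] (v : Fin n → Pt) (i : Fin n) : Set Pt :=
  Lhp (v (i - 1)) (v i) ∩ Rhp (v (i + 1)) (v i) ∩ polyInterior v

/-- `x` sees `y` inside the polygon `v`: the segment `xy` is contained in the region. -/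
def Sees {n : ℕ} [NeZero n] (v : Fin n → Pt) (x y : Pt) : Prop :=
  segment ℝ x y ⊆ polyRegion v

/-- The kernel of the polygon: the points of the region that see every point of it. -/
def polyKernel {n : ℕ} [NeZero n] (v : Fin n → Pt) : Set Pt :=
  {x ∈ polyRegion v | ∀ y ∈ polyRegion v, segment ℝ x y ⊆ polyRegion v}

/-- The open triangle on three points. -/
def openTriangle (a b c : Pt) : Set Pt := interior (convexHull ℝ {a, b, c})

/-- `a b c d` (in counterclockwise order) form a strictly convex quadrilateral. -/
def StrictConvexQuad (a b c d : Pt) : Prop :=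
  0 < det2 (b - a) (c - b) ∧ 0 < det2 (c - b) (d - c) ∧
    0 < det2 (d - c) (a - d) ∧ 0 < det2 (a - d) (b - a)

/-- The closed region of a quadrilateral cell. -/
noncomputable def quadSet (q : Pt × Pt × Pt × Pt) : Set Pt :=
  convexHull ℝ {q.1, q.2.1, q.2.2.1, q.2.2.2}

/-- The closed region of a triangular cell. -/
noncomputable def triSet (t : Pt × Pt × Pt) : Set Pt :=
  convexHull ℝ {t.1, t.2.1, t.2.2}

/-- The vertices of a quadrilateral cell. -/
noncomputable def quadVerts (q : Pt × Pt × Pt × Pt) : Finset Pt :=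
  {q.1, q.2.1, q.2.2.1, q.2.2.2}

/-- The vertices of a triangular cell. -/
noncomputable def triVerts (t : Pt × Pt × Pt) : Finset Pt :=
  {t.1, t.2.1, t.2.2}

/-- A strictly convex quadrangulation of a finite planar point set `S`:
a decomposition of `conv S` into strictly convex quadrilaterals and at most one
(nondegenerate) triangle, with pairwise disjoint interiors, whose vertex set contains
`S`, and such that no point of `S` is interior to a cell. -/
structure ConvexQuadrangulation (S : Finset Pt) where
  quads : Finset (Pt × Pt × Pt × Pt)
  tris : Finset (Pt × Pt × Pt)
  tris_card : tris.card ≤ 1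
  quads_convex : ∀ q ∈ quads, StrictConvexQuad q.1 q.2.1 q.2.2.1 q.2.2.2
  tris_nondeg : ∀ t ∈ tris, 0 < det2 (t.2.1 - t.1) (t.2.2 - t.2.1)
  covers : ((⋃ q ∈ quads, quadSet q) ∪ ⋃ t ∈ tris, triSet t) = convexHull ℝ (S : Set Pt)
  cells_disjoint : ((quadSet '' quads) ∪ (triSet '' tris)).Pairwise
    fun A B => interior A ∩ interior B = ∅
  verts_cover : (S : Set Pt) ⊆
    ((quads.biUnion quadVerts ∪ tris.biUnion triVerts : Finset Pt) : Set Pt)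
  no_pt_in_quad_interior : ∀ q ∈ quads, ∀ p ∈ S, p ∉ interior (quadSet q)
  no_pt_in_tri_interior : ∀ t ∈ tris, ∀ p ∈ S, p ∉ interior (triSet t)

/-- The Steiner points of a quadrangulation: vertices of the decomposition not in `S`. -/
noncomputable def steinerPoints (S : Finset Pt) (Q : ConvexQuadrangulation S) : Finset Pt :=
  (Q.quads.biUnion quadVerts ∪ Q.tris.biUnion triVerts) \ S

/-!
Let `P` consist of the vertices `v j` of a regular `k`-gon and of its dents, points slightly inside
the edges. Say that a Steiner point serves an edge if it is very close to its line, but not on the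
edge near one of its ends. A cell at the midpoint of an edge cannot contain the dent in its
interior, so it is flat; if no Steiner point serves the edge, then this cell is a triangle with the
dent as its apex. As there is at most one triangle, all edges but one are served. A Steiner point
serves at most two edges, which are then adjacent. Thus fewer than `k / 2` Steiner points are only
possible if exactly one edge is unserved, every other edge is served once, and every Steiner point
lies near a vertex and serves the two edges there.

In this case, removing the cells along the edges leaves a polygon with `2 * k` vertices, every
second of them reflex, decomposed into quadrilaterals with vertices among its own. A quadrilateral
that cuts off a minimal number of vertices has four consecutive vertices of the polygon, and one of
its two middle vertices is reflex: a contradiction.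
-/

open Filter Topology

/-! ### Orientation of point triples -/

section Orientation

variable (a b c d x y z : Pt)

/-- The orientation form of the plane: twice the signed area of the triangle `a b c`, positive
exactly when `c` lies strictly to the left of the directed line from `a` to `b`. -/
noncomputable def orient (a b c : Pt) : ℝ := det2 (b - a) (c - a)

theorem orient_eq :
    orient a b c = (b.1 - a.1) * (c.2 - a.2) - (b.2 - a.2) * (c.1 - a.1) := rfl

theorem orient_rotate_left : orient b c a = orient a b c := by simp only [orient_eq]; ring

theorem orient_rotate_right : orient c a b = orient a b c := by simp only [orient_eq]; ring

theorem orient_swap_left : orient b a c = -orient a b c := by simp only [orient_eq]; ring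

theorem orient_swap_right : orient a c b = -orient a b c := by simp only [orient_eq]; ring

theorem orient_reverse : orient c b a = -orient a b c := by simp only [orient_eq]; ring

@[simp] theorem orient_self : orient a a b = 0 := by simp only [orient_eq]; ring

@[simp] theorem orient_self_left : orient a b a = 0 := by simp only [orient_eq]; ring

@[simp] theorem orient_self_right : orient a b b = 0 := by simp only [orient_eq]; ring

theorem orient_add_orient_add_orient :
    orient a b z + orient b c z + orient c a z = orient a b c := by
  simp only [orient_eq]; ring

/-- The last argument of `orient a b`, as an affine functional. -/
noncomputable def orientAffine : Pt →ᵃ[ℝ] ℝ where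
  toFun := orient a b
  linear :=
    { toFun := det2 (b - a)
      map_add' := fun _ _ => by simp only [det2, Prod.fst_add, Prod.snd_add]; ring
      map_smul' := fun _ _ => by
        simp only [det2, Prod.smul_fst, Prod.smul_snd, smul_eq_mul, RingHom.id_apply]; ring }
  map_vadd' := fun _ _ => by
    simp only [orient, det2, vadd_eq_add, LinearMap.coe_mk, AddHom.coe_mk, Prod.fst_sub,
      Prod.snd_sub, Prod.fst_add, Prod.snd_add]
    ring

theorem orient_midpoint : orient a b (midpoint ℝ x y) = (orient a b x + orient a b y) / 2 := by
  have h := (orientAffine a b).map_midpoint x y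
  rw [midpoint_eq_smul_add ℝ (orientAffine a b x), smul_eq_mul, invOf_eq_inv, inv_mul_eq_div] at h
  exact h

theorem orient_lineMap (t : ℝ) :
    orient a b (AffineMap.lineMap x y t) = (1 - t) * orient a b x + t * orient a b y := by
  have h := (orientAffine a b).apply_lineMap x y t
  rwa [AffineMap.lineMap_apply_module (orientAffine a b x), smul_eq_mul, smul_eq_mul] at h

theorem orient_lineMap_lineMap (s t : ℝ) :
    orient (AffineMap.lineMap a b s) (AffineMap.lineMap a b t) z = (t - s) * orient a b z := by
  simp only [orient_eq, AffineMap.lineMap_apply_module, Prod.fst_add, Prod.snd_add, Prod.smul_fst,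
    Prod.smul_snd, smul_eq_mul]
  ring

theorem continuous_orient : Continuous (orient a b) :=
  (orientAffine a b).continuous_of_finiteDimensional

theorem convex_setOf_orient_nonneg : Convex ℝ {z | 0 ≤ orient a b z} :=
  (convex_Ici (0 : ℝ)).affine_preimage (orientAffine a b)

variable {a b c d x y z}

theorem ne_of_orient_ne_zero (h : orient a b c ≠ 0) : a ≠ b ∧ a ≠ c ∧ b ≠ c := by
  refine ⟨?_, ?_, ?_⟩ <;> rintro rfl <;> simp at h

theorem exists_eq_lineMap_of_orient_eq_zero (hab : a ≠ b) (h : orient a b z = 0) :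
    ∃ t : ℝ, z = AffineMap.lineMap a b t := by
  rw [orient_eq] at h
  simp only [AffineMap.lineMap_apply_module, Prod.ext_iff, Prod.fst_add, Prod.snd_add,
    Prod.smul_fst, Prod.smul_snd, smul_eq_mul]
  by_cases h₁ : b.1 - a.1 = 0
  · have h₂ : b.2 - a.2 ≠ 0 := fun h₂ => hab (Prod.ext (by linarith) (by linarith))
    refine ⟨(z.2 - a.2) / (b.2 - a.2), ?_, ?_⟩ <;> field_simp
    · linear_combination -h
    · ring
  · refine ⟨(z.1 - a.1) / (b.1 - a.1), ?_, ?_⟩ <;> field_simp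
    · ring
    · linear_combination h

theorem eventually_orient_lineMap_pos (h : 0 < orient a b x) :
    ∀ᶠ t : ℝ in 𝓝[>] 0, 0 < orient a b (AffineMap.lineMap x y t) := by
  have hcont : Continuous fun t : ℝ => orient a b (AffineMap.lineMap x y t) :=
    (continuous_orient a b).comp AffineMap.lineMap_continuous
  refine nhdsWithin_le_nhds (hcont.continuousAt.eventually (lt_mem_nhds ?_))
  simpa using h

theorem eventually_mem_Ioo_zero_one : ∀ᶠ t : ℝ in 𝓝[>] 0, t ∈ Set.Ioo (0 : ℝ) 1 :=
  Ioo_mem_nhdsGT one_pos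

/-- General position of a set of points: no three of them are collinear. -/
def GeneralPosition (S : Set Pt) : Prop :=
  ∀ ⦃a⦄, a ∈ S → ∀ ⦃b⦄, b ∈ S → ∀ ⦃c⦄, c ∈ S → a ≠ b → a ≠ c → b ≠ c → orient a b c ≠ 0

end Orientation

/-! ### Convex hulls and triangles -/

section ConvexHull

theorem mem_convexHull_setOf_eq {E : Type*} [AddCommGroup E] [Module ℝ E] (f : E →ᵃ[ℝ] ℝ)
    {s : Set E} {m : E} (hs : ∀ w ∈ s, f m ≤ f w) (hm : m ∈ convexHull ℝ s) :
    m ∈ convexHull ℝ {w ∈ s | f w = f m} := by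
  set F := convexHull ℝ {w ∈ s | f w = f m}
  have hF_eq : ∀ z ∈ F, f z = f m := fun z hz =>
    convexHull_min (fun w hw => hw.2) ((convex_singleton (f m)).affine_preimage f) hz
  have hconv : Convex ℝ ({z | f m < f z} ∪ F) := by
    have hlt : ∀ {p q : ℝ} {x y : E}, 0 < p → 0 < q → p + q = 1 → f m < f x → f m ≤ f y →
        f m < f (p • x + q • y) := by
      intro p q x y hp hq hpq hx hy
      calc f m = p * f m + q * f m := by rw [← add_mul, hpq, one_mul]
        _ < p * f x + q * f y := add_lt_add_of_lt_of_le (by gcongr) (by gcongr)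
        _ = f (p • x + q • y) := (Convex.combo_affine_apply hpq).symm
    rw [convex_iff_openSegment_subset]
    rintro x hx y hy _ ⟨p, q, hp, hq, hpq, rfl⟩
    rcases hx with hx | hx
    · exact Or.inl (hlt hp hq hpq hx (hy.elim (fun hy => le_of_lt hy) fun hy => (hF_eq y hy).ge))
    · rcases hy with hy | hy
      · rw [add_comm]
        exact Or.inl (hlt hq hp ((add_comm q p).trans hpq) hy (hF_eq x hx).ge)
      · exact Or.inr (convex_convexHull ℝ _ hx hy hp.le hq.le hpq)
  have hsub : s ⊆ {z | f m < f z} ∪ F := fun w hw =>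
    (hs w hw).lt_or_eq.imp id fun h => subset_convexHull ℝ _ ⟨hw, h.symm⟩
  exact (convexHull_min hsub hconv hm).resolve_left (lt_irrefl (f m))

variable {a b c z : Pt} {K : Set Pt}

theorem mem_and_mem_of_midpoint_mem_convexHull {s : Set Pt} (hab : a ≠ b)
    (hs : ∀ w ∈ s, 0 ≤ orient a b w) (hm : midpoint ℝ a b ∈ convexHull ℝ s)
    (hline : ∀ w ∈ s, orient a b w = 0 → w = a ∨ w = b) : a ∈ s ∧ b ∈ s := by
  have hm₀ : orient a b (midpoint ℝ a b) = 0 := by simp [orient_midpoint]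
  have hface : midpoint ℝ a b ∈ convexHull ℝ {w ∈ s | orient a b w = 0} := by
    have := mem_convexHull_setOf_eq (orientAffine a b) (fun w hw => hm₀.le.trans (hs w hw)) hm
    rwa [show orientAffine a b (midpoint ℝ a b) = 0 from hm₀] at this
  constructor <;> by_contra hmem
  · have hsub : {w ∈ s | orient a b w = 0} ⊆ {b} := fun w hw =>
      (hline w hw.1 hw.2).resolve_left fun h => hmem (h ▸ hw.1)
    have := convexHull_mono hsub hface
    rw [convexHull_singleton, Set.mem_singleton_iff, midpoint_eq_right_iff] at this
    exact hab this
  · have hsub : {w ∈ s | orient a b w = 0} ⊆ {a} := fun w hw =>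
      (hline w hw.1 hw.2).resolve_right fun h => hmem (h ▸ hw.1)
    have := convexHull_mono hsub hface
    rw [convexHull_singleton, Set.mem_singleton_iff, midpoint_eq_left_iff] at this
    exact hab this

theorem mem_of_orient_nonneg (hK : Convex ℝ K) (ha : a ∈ K) (hb : b ∈ K) (hc : c ∈ K)
    (habc : 0 < orient a b c) (hab : 0 ≤ orient a b z) (hbc : 0 ≤ orient b c z)
    (hca : 0 ≤ orient c a z) : z ∈ K := by
  have hsum := orient_add_orient_add_orient a b c z
  have hmem := hK.sum_mem (t := Finset.univ) (z := ![a, b, c])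
    (w := ![orient b c z / orient a b c, orient c a z / orient a b c, orient a b z / orient a b c])
    (fun i _ => by fin_cases i <;> simp only [Fin.zero_eta, Fin.mk_one, Fin.reduceFinMk,
      Matrix.cons_val] <;> positivity)
    (by simp only [Fin.sum_univ_three, Matrix.cons_val]; field_simp; linarith)
    (by intro i _; fin_cases i <;> simp [ha, hb, hc])
  convert hmem using 1
  have hne := habc.ne'
  ext <;>
    simp only [Fin.sum_univ_three, Matrix.cons_val, Prod.fst_add, Prod.snd_add, Prod.smul_fst,
      Prod.smul_snd, smul_eq_mul] <;>
    field_simp <;> simp only [orient_eq] <;> ring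

theorem mem_interior_of_orient_pos (hK : Convex ℝ K) (ha : a ∈ K) (hb : b ∈ K) (hc : c ∈ K)
    (hab : 0 < orient a b z) (hbc : 0 < orient b c z) (hca : 0 < orient c a z) :
    z ∈ interior K := by
  have hopen : IsOpen {w | 0 < orient a b w ∧ 0 < orient b c w ∧ 0 < orient c a w} :=
    (isOpen_lt continuous_const (continuous_orient a b)).inter
      ((isOpen_lt continuous_const (continuous_orient b c)).inter
        (isOpen_lt continuous_const (continuous_orient c a)))
  refine interior_maximal ?_ hopen ⟨hab, hbc, hca⟩
  rintro w ⟨h₁, h₂, h₃⟩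
  have hsum := orient_add_orient_add_orient a b c w
  exact mem_of_orient_nonneg hK ha hb hc (by linarith) h₁.le h₂.le h₃.le

theorem nonempty_interior_of_orient_pos (hK : Convex ℝ K) (ha : a ∈ K) (hb : b ∈ K) (hc : c ∈ K)
    (habc : 0 < orient a b c) : (interior K).Nonempty := by
  refine ⟨AffineMap.lineMap a (midpoint ℝ b c) (2 / 3 : ℝ),
    mem_interior_of_orient_pos hK ha hb hc ?_ ?_ ?_⟩ <;>
  simp only [orient_lineMap, orient_midpoint, orient_self_left, orient_self_right,
    orient_rotate_left] <;> linarith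

theorem orient_nonneg_of_mem_convexHull {s : Set Pt} (hs : ∀ u ∈ s, 0 ≤ orient a b u)
    (hz : z ∈ convexHull ℝ s) : 0 ≤ orient a b z :=
  convexHull_min hs (convex_setOf_orient_nonneg a b) hz

theorem extremePoints_convexHull_of_convexIndependent {E : Type*} [AddCommGroup E] [Module ℝ E]
    [TopologicalSpace E] [IsTopologicalAddGroup E] [ContinuousSMul ℝ E] [T2Space E]
    [LocallyConvexSpace ℝ E] {s : Set E} (hs : s.Finite)
    (hind : ConvexIndependent ℝ (Subtype.val : s → E)) :
    Set.extremePoints ℝ (convexHull ℝ s) = s := by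
  refine extremePoints_convexHull_subset.antisymm fun x hx => ?_
  by_contra hxe
  have hfin : (Set.extremePoints ℝ (convexHull ℝ s)).Finite :=
    hs.subset extremePoints_convexHull_subset
  have hKM := closure_convexHull_extremePoints (hs.isCompact_convexHull ℝ) (convex_convexHull ℝ s)
  rw [(hfin.isClosed_convexHull ℝ).closure_eq] at hKM
  refine convexIndependent_set_iff_notMem_convexHull_sdiff.1 hind x hx ?_
  refine convexHull_mono (fun y hy => ?_) (hKM.ge (subset_convexHull ℝ s hx))
  exact ⟨extremePoints_convexHull_subset hy, fun h => hxe (h ▸ hy)⟩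

end ConvexHull

/-! ### Cells of a convex quadrangulation -/

section ConvexPosition

variable {a b c d : Pt} {s : Set Pt}

theorem GeneralPosition.of_convexIndependent
    (hs : ConvexIndependent ℝ (Subtype.val : s → Pt)) : GeneralPosition s := by
  have hnot : ∀ ⦃x⦄, x ∈ s → ∀ ⦃y⦄, y ∈ s → ∀ ⦃z⦄, z ∈ s → x ≠ y → y ≠ z → ¬ Wbtw ℝ x y z := by
    intro x hx y hy z hz hxy hyz hw
    refine convexIndependent_set_iff_notMem_convexHull_sdiff.1 hs y hy ?_
    have hy' : y ∈ segment ℝ x z := by rw [← affineSegment_eq_segment]; exact hw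
    rw [← convexHull_pair] at hy'
    refine convexHull_mono ?_ hy'
    rintro w (rfl | rfl)
    exacts [⟨hx, hxy⟩, ⟨hz, hyz.symm⟩]
  intro a ha b hb c hc hab hac hbc h
  obtain ⟨t, rfl⟩ := exists_eq_lineMap_of_orient_eq_zero hab h
  have hcol : Collinear ℝ {AffineMap.lineMap a b t, a, b} :=
    collinear_insert_of_mem_affineSpan_pair (AffineMap.lineMap_mem_affineSpan_pair t a b)
  rcases hcol.wbtw_or_wbtw_or_wbtw with hw | hw | hw
  · exact hnot hc ha hb hac.symm hab hw
  · exact hnot ha hb hc hab hbc hw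
  · exact hnot hb hc ha hbc hac.symm hw

theorem exists_orient_neg_of_convexIndependent (hs : ConvexIndependent ℝ (Subtype.val : s → Pt))
    (ha : a ∈ s) (hb : b ∈ s) (hc : c ∈ s) (hd : d ∈ s) (had : a ≠ d) (hbd : b ≠ d) (hcd : c ≠ d)
    (habc : 0 < orient a b c) : orient a b d < 0 ∨ orient b c d < 0 ∨ orient c a d < 0 := by
  by_contra! hcon
  exact convexIndependent_set_iff_notMem_convexHull_sdiff.1 hs d hd <|
    mem_of_orient_nonneg (convex_convexHull ℝ _) (subset_convexHull ℝ _ ⟨ha, had⟩)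
      (subset_convexHull ℝ _ ⟨hb, hbd⟩) (subset_convexHull ℝ _ ⟨hc, hcd⟩) habc
      hcon.1 hcon.2.1 hcon.2.2

theorem convexIndependent_of_orient_pos (h : 0 < orient a b c) :
    ConvexIndependent ℝ (Subtype.val : ({a, b, c} : Set Pt) → Pt) := by
  have hnot : ∀ {x y z : Pt}, 0 < orient x y z → x ∉ convexHull ℝ ({y, z} : Set Pt) := by
    intro x y z hxyz hx
    have hyz : ∀ u ∈ ({y, z} : Set Pt), 0 ≤ orient z y u := by simp
    have := orient_nonneg_of_mem_convexHull hyz hx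
    rw [orient_reverse] at this
    linarith
  have h₁ : 0 < orient b c a := by rwa [orient_rotate_left]
  have h₂ : 0 < orient c a b := by rwa [orient_rotate_right]
  rw [convexIndependent_set_iff_notMem_convexHull_sdiff]
  rintro x (rfl | rfl | rfl) hx
  · exact hnot h (convexHull_mono (by grind) hx)
  · exact hnot h₁ (convexHull_mono (by grind) hx)
  · exact hnot h₂ (convexHull_mono (by grind) hx)

theorem strictConvexQuad_iff_orient_pos : StrictConvexQuad a b c d ↔
    0 < orient a b c ∧ 0 < orient b c d ∧ 0 < orient c d a ∧ 0 < orient d a b := by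
  have h : ∀ x y z : Pt, det2 (y - x) (z - y) = orient x y z := fun x y z => by
    simp only [orient_eq, det2, Prod.fst_sub, Prod.snd_sub]; ring
  simp only [StrictConvexQuad, h]

namespace StrictConvexQuad

theorem rotate (h : StrictConvexQuad a b c d) : StrictConvexQuad b c d a :=
  ⟨h.2.1, h.2.2.1, h.2.2.2, h.1⟩

theorem notMem_convexHull (h : StrictConvexQuad a b c d) :
    a ∉ convexHull ℝ ({b, c, d} : Set Pt) := by
  rw [strictConvexQuad_iff_orient_pos] at h
  have hpos : ∀ u ∈ ({b, c, d} : Set Pt), 0 ≤ orient d b u := by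
    simpa [orient_rotate_right b c d] using h.2.1.le
  intro ha
  have := orient_nonneg_of_mem_convexHull hpos ha
  rw [orient_swap_right] at this
  linarith [h.2.2.2]

theorem convexIndependent (h : StrictConvexQuad a b c d) :
    ConvexIndependent ℝ (Subtype.val : ({a, b, c, d} : Set Pt) → Pt) := by
  rw [convexIndependent_set_iff_notMem_convexHull_sdiff]
  rintro x (rfl | rfl | rfl | rfl) hx
  · exact h.notMem_convexHull (convexHull_mono (by grind) hx)
  · exact h.rotate.notMem_convexHull (convexHull_mono (by grind) hx)
  · exact h.rotate.rotate.notMem_convexHull (convexHull_mono (by grind) hx)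
  · exact h.rotate.rotate.rotate.notMem_convexHull (convexHull_mono (by grind) hx)

theorem card_quadVerts (h : StrictConvexQuad a b c d) : (quadVerts (a, b, c, d)).card = 4 := by
  rw [strictConvexQuad_iff_orient_pos] at h
  have hab := ne_of_orient_ne_zero h.1.ne'
  have hbc := ne_of_orient_ne_zero h.2.1.ne'
  have hda := ne_of_orient_ne_zero h.2.2.2.ne'
  exact Finset.card_eq_succ.2 ⟨a, {b, c, d}, by grind, rfl,
    Finset.card_eq_three.2 ⟨b, c, d, hbc.1, hbc.2.1, hbc.2.2, rfl⟩⟩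

end StrictConvexQuad

end ConvexPosition

/-- `a b` is a side of the polygon with vertex set `W`, traversed with `W` on its left. -/
structure IsLeftEdge (W : Finset Pt) (a b : Pt) : Prop where
  left_mem : a ∈ W
  right_mem : b ∈ W
  orient_nonneg : ∀ u ∈ W, 0 ≤ orient a b u
  exists_orient_pos : ∃ u ∈ W, 0 < orient a b u

theorem IsLeftEdge.eventually_lineMap_mem_interior {W : Finset Pt} {a b z : Pt}
    (h : IsLeftEdge W a b) (hz : 0 < orient a b z) :
    ∀ᶠ t : ℝ in 𝓝[>] 0,
      AffineMap.lineMap (midpoint ℝ a b) z t ∈ interior (convexHull ℝ (W : Set Pt)) := by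
  obtain ⟨w, hw, hpos⟩ := h.exists_orient_pos
  have hbw : 0 < orient b w (midpoint ℝ a b) := by
    rw [orient_midpoint, orient_rotate_left, orient_self_left]; linarith
  have hwa : 0 < orient w a (midpoint ℝ a b) := by
    rw [orient_midpoint, orient_self_right, orient_rotate_right]; linarith
  filter_upwards [eventually_orient_lineMap_pos (x := midpoint ℝ a b) (y := z) hbw,
    eventually_orient_lineMap_pos (x := midpoint ℝ a b) (y := z) hwa,
    eventually_mem_Ioo_zero_one] with t ht₁ ht₂ ht
  refine mem_interior_of_orient_pos (convex_convexHull ℝ _) (subset_convexHull ℝ _ h.left_mem)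
    (subset_convexHull ℝ _ h.right_mem) (subset_convexHull ℝ _ hw) ?_ ht₁ ht₂
  rw [orient_lineMap, orient_midpoint, orient_self_left, orient_self_right]
  linarith [mul_pos ht.1 hz]

namespace ConvexQuadrangulation

variable {P : Finset Pt} (Q : ConvexQuadrangulation P) {W W' : Finset Pt} {z : Pt}

/-- The cells of a quadrangulation, each represented by its set of vertices. -/
noncomputable def cells : Finset (Finset Pt) := Q.quads.image quadVerts ∪ Q.tris.image triVerts

variable {Q}

theorem mem_cells :
    W ∈ Q.cells ↔ (∃ q ∈ Q.quads, quadVerts q = W) ∨ ∃ t ∈ Q.tris, triVerts t = W := by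
  simp only [cells, Finset.mem_union, Finset.mem_image]

theorem convexHull_quadVerts (q : Pt × Pt × Pt × Pt) :
    convexHull ℝ (quadVerts q : Set Pt) = quadSet q := by
  simp [quadVerts, quadSet]

theorem convexHull_triVerts (t : Pt × Pt × Pt) : convexHull ℝ (triVerts t : Set Pt) = triSet t := by
  simp [triVerts, triSet]

theorem orient_pos_of_mem_tris {t : Pt × Pt × Pt} (ht : t ∈ Q.tris) :
    0 < orient t.1 t.2.1 t.2.2 := by
  have := Q.tris_nondeg t ht
  simp only [det2, Prod.fst_sub, Prod.snd_sub] at this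
  rw [orient_eq]
  linarith

theorem convexIndependent_of_mem_cells (hW : W ∈ Q.cells) :
    ConvexIndependent ℝ (Subtype.val : ↥(W : Set Pt) → Pt) := by
  rcases mem_cells.1 hW with ⟨⟨a, b, c, d⟩, hq, rfl⟩ | ⟨⟨a, b, c⟩, ht, rfl⟩
  · rw [show (quadVerts (a, b, c, d) : Set Pt) = {a, b, c, d} by simp [quadVerts]]
    exact (Q.quads_convex _ hq).convexIndependent
  · rw [show (triVerts (a, b, c) : Set Pt) = {a, b, c} by simp [triVerts]]
    exact convexIndependent_of_orient_pos (orient_pos_of_mem_tris ht)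

theorem generalPosition_of_mem_cells (hW : W ∈ Q.cells) : GeneralPosition (W : Set Pt) :=
  .of_convexIndependent (convexIndependent_of_mem_cells hW)

theorem card_triVerts {t : Pt × Pt × Pt} (ht : t ∈ Q.tris) : (triVerts t).card = 3 := by
  obtain ⟨hab, hac, hbc⟩ := ne_of_orient_ne_zero (orient_pos_of_mem_tris ht).ne'
  exact Finset.card_eq_three.2 ⟨_, _, _, hab, hac, hbc, rfl⟩

theorem card_eq_three_or_four (hW : W ∈ Q.cells) : W.card = 3 ∨ W.card = 4 := by
  rcases mem_cells.1 hW with ⟨q, hq, rfl⟩ | ⟨t, ht, rfl⟩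
  · exact Or.inr (Q.quads_convex q hq).card_quadVerts
  · exact Or.inl (card_triVerts ht)

theorem eq_of_card_eq_three (hW : W ∈ Q.cells) (hW' : W' ∈ Q.cells) (h : W.card = 3)
    (h' : W'.card = 3) : W = W' := by
  have hquad : ∀ q ∈ Q.quads, (quadVerts q).card ≠ 3 := fun q hq h => by
    have : (quadVerts q).card = 4 := (Q.quads_convex q hq).card_quadVerts
    omega
  rcases mem_cells.1 hW with ⟨q, hq, rfl⟩ | ⟨t, ht, rfl⟩
  · exact absurd h (hquad q hq)
  rcases mem_cells.1 hW' with ⟨q, hq, rfl⟩ | ⟨t', ht', rfl⟩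
  · exact absurd h' (hquad q hq)
  rw [Finset.card_le_one.1 Q.tris_card t ht t' ht']

theorem nonempty_interior (hW : W ∈ Q.cells) :
    (interior (convexHull ℝ (W : Set Pt))).Nonempty := by
  obtain ⟨a, ha, b, hb, c, hc, hpos⟩ : ∃ a ∈ W, ∃ b ∈ W, ∃ c ∈ W, 0 < orient a b c := by
    rcases mem_cells.1 hW with ⟨q, hq, rfl⟩ | ⟨t, ht, rfl⟩
    · exact ⟨q.1, by simp [quadVerts], q.2.1, by simp [quadVerts], q.2.2.1, by simp [quadVerts],
        (strictConvexQuad_iff_orient_pos.1 (Q.quads_convex q hq)).1⟩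
    · exact ⟨t.1, by simp [triVerts], t.2.1, by simp [triVerts], t.2.2, by simp [triVerts],
        orient_pos_of_mem_tris ht⟩
  exact nonempty_interior_of_orient_pos (convex_convexHull ℝ _) (subset_convexHull ℝ _ ha)
    (subset_convexHull ℝ _ hb) (subset_convexHull ℝ _ hc) hpos

theorem convexHull_mem_image (hW : W ∈ Q.cells) :
    convexHull ℝ (W : Set Pt) ∈ quadSet '' Q.quads ∪ triSet '' Q.tris := by
  rcases mem_cells.1 hW with ⟨q, hq, rfl⟩ | ⟨t, ht, rfl⟩
  · exact Or.inl ⟨q, hq, (convexHull_quadVerts q).symm⟩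
  · exact Or.inr ⟨t, ht, (convexHull_triVerts t).symm⟩

theorem mem_convexHull_iff_exists_cell :
    z ∈ convexHull ℝ (P : Set Pt) ↔ ∃ W ∈ Q.cells, z ∈ convexHull ℝ (W : Set Pt) := by
  simp only [← Q.covers, mem_cells, Set.mem_union, Set.mem_iUnion, or_and_right, exists_or,
    exists_exists_and_eq_and, convexHull_quadVerts, convexHull_triVerts, exists_prop]

theorem convexHull_subset (hW : W ∈ Q.cells) :
    convexHull ℝ (W : Set Pt) ⊆ convexHull ℝ (P : Set Pt) :=
  fun _ hz => mem_convexHull_iff_exists_cell.2 ⟨W, hW, hz⟩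

theorem mem_biUnion_verts_iff :
    z ∈ Q.quads.biUnion quadVerts ∪ Q.tris.biUnion triVerts ↔ ∃ W ∈ Q.cells, z ∈ W := by
  simp only [Finset.mem_union, Finset.mem_biUnion, mem_cells, or_and_right, exists_or,
    exists_exists_and_eq_and]

theorem mem_or_mem_steinerPoints (hW : W ∈ Q.cells) (hz : z ∈ W) :
    z ∈ P ∨ z ∈ steinerPoints P Q :=
  or_iff_not_imp_left.2 fun hP =>
    Finset.mem_sdiff.2 ⟨mem_biUnion_verts_iff.2 ⟨W, hW, hz⟩, hP⟩

theorem mem_convexHull_of_mem_steinerPoints (hz : z ∈ steinerPoints P Q) :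
    z ∈ convexHull ℝ (P : Set Pt) := by
  obtain ⟨W, hW, hzW⟩ := mem_biUnion_verts_iff.1 (Finset.mem_sdiff.1 hz).1
  exact convexHull_subset hW (subset_convexHull ℝ _ hzW)

theorem notMem_interior (hW : W ∈ Q.cells) (hz : z ∈ P) :
    z ∉ interior (convexHull ℝ (W : Set Pt)) := by
  rcases mem_cells.1 hW with ⟨q, hq, rfl⟩ | ⟨t, ht, rfl⟩
  · rw [convexHull_quadVerts]; exact Q.no_pt_in_quad_interior q hq z hz
  · rw [convexHull_triVerts]; exact Q.no_pt_in_tri_interior t ht z hz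

theorem eq_of_mem_interior (hW : W ∈ Q.cells) (hW' : W' ∈ Q.cells)
    (hz : z ∈ interior (convexHull ℝ (W : Set Pt))) (hz' : z ∈ convexHull ℝ (W' : Set Pt)) :
    W = W' := by
  have hhull : convexHull ℝ (W : Set Pt) = convexHull ℝ (W' : Set Pt) := by
    by_contra hne
    have hdisj := Q.cells_disjoint (convexHull_mem_image hW) (convexHull_mem_image hW') hne
    have hcl : z ∈ closure (interior (convexHull ℝ (W' : Set Pt))) := by
      rw [(convex_convexHull ℝ _).closure_interior_eq_closure_of_nonempty_interior
        (nonempty_interior hW')]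
      exact subset_closure hz'
    obtain ⟨y, hy⟩ := mem_closure_iff.1 hcl _ isOpen_interior hz
    exact Set.notMem_empty y (hdisj ▸ hy)
  have hext : ∀ {V}, V ∈ Q.cells → Set.extremePoints ℝ (convexHull ℝ (V : Set Pt)) = V :=
    fun hV => extremePoints_convexHull_of_convexIndependent (Finset.finite_toSet _)
      (convexIndependent_of_mem_cells hV)
  rw [← Finset.coe_inj, ← hext hW, hhull, hext hW']

theorem exists_cell_frequently_lineMap_mem {m : Pt} (hm : m ∈ convexHull ℝ (P : Set Pt))
    (hz : z ∈ convexHull ℝ (P : Set Pt)) :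
    ∃ W ∈ Q.cells, ∃ᶠ t : ℝ in 𝓝[>] 0, AffineMap.lineMap m z t ∈ convexHull ℝ (W : Set Pt) := by
  by_contra! hcon
  have hnone : ∀ᶠ t : ℝ in 𝓝[>] 0, ∀ W ∈ Q.cells,
      AffineMap.lineMap m z t ∉ convexHull ℝ (W : Set Pt) :=
    (eventually_all_finset _).2 fun W hW => hcon W hW
  obtain ⟨t, ht, ht01⟩ := (hnone.and eventually_mem_Ioo_zero_one).exists
  have hmem := (convex_convexHull ℝ (P : Set Pt)).lineMap_mem hm hz (Set.Ioo_subset_Icc_self ht01)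
  obtain ⟨W, hW, htW⟩ := (mem_convexHull_iff_exists_cell (Q := Q)).1 hmem
  exact ht W hW htW

theorem exists_cell_across {x y w : Pt} (hW : W ∈ Q.cells) (hxy : IsLeftEdge W x y)
    (hw : w ∈ convexHull ℝ (P : Set Pt)) (hpos : 0 < orient y x w) :
    ∃ W' ∈ Q.cells, midpoint ℝ x y ∈ convexHull ℝ (W' : Set Pt) ∧ ∀ u ∈ W', 0 ≤ orient y x u := by
  have hmW : midpoint ℝ x y ∈ convexHull ℝ (W : Set Pt) :=
    (convex_convexHull ℝ _).midpoint_mem (subset_convexHull ℝ _ hxy.left_mem)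
      (subset_convexHull ℝ _ hxy.right_mem)
  obtain ⟨W', hW', hfreq⟩ :=
    exists_cell_frequently_lineMap_mem (Q := Q) (convexHull_subset hW hmW) hw
  have hlim : Tendsto (fun t : ℝ => AffineMap.lineMap (midpoint ℝ x y) w t) (𝓝[>] 0)
      (𝓝 (midpoint ℝ x y)) := by
    simpa using (AffineMap.lineMap_continuous.tendsto (0 : ℝ)).mono_left nhdsWithin_le_nhds
  have hmW' : midpoint ℝ x y ∈ convexHull ℝ (W' : Set Pt) :=
    ((W'.finite_toSet).isClosed_convexHull ℝ).mem_of_frequently_of_tendsto hfreq hlim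
  refine ⟨W', hW', hmW', fun u hu => ?_⟩
  by_contra! hlt
  -- If `u` were on the side of `W`, the cells would overlap near the midpoint and hence coincide.
  obtain ⟨r, hr, hr01⟩ := ((hxy.eventually_lineMap_mem_interior (z := u)
    (by rw [orient_swap_left]; linarith)).and eventually_mem_Ioo_zero_one).exists
  have heq : W = W' := eq_of_mem_interior hW hW' hr <|
    (convex_convexHull ℝ _).lineMap_mem hmW' (subset_convexHull ℝ _ hu)
      (Set.Ioo_subset_Icc_self hr01)
  obtain ⟨t, ht, ht01⟩ := (hfreq.and_eventually eventually_mem_Ioo_zero_one).exists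
  have hside := orient_nonneg_of_mem_convexHull hxy.orient_nonneg (heq ▸ ht)
  rw [orient_lineMap, orient_midpoint, orient_self_left, orient_self_right,
    orient_swap_left y x w] at hside
  linarith [mul_pos ht01.1 hpos]

theorem eq_of_mem_sector {h p q y : Pt} (hW : W ∈ Q.cells) (hW' : W' ∈ Q.cells) (hhW : h ∈ W)
    (hy : y ∈ interior (convexHull ℝ (W : Set Pt))) (hhW' : h ∈ W') (hp : p ∈ W') (hq : q ∈ W')
    (hpos : 0 < orient h p q) (hpy : 0 ≤ orient h p y) (hqy : 0 ≤ orient q h y) : W = W' := by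
  obtain ⟨t, ht, ht01⟩ := ((eventually_orient_lineMap_pos (y := y)
    (show 0 < orient p q h by rwa [orient_rotate_left])).and eventually_mem_Ioo_zero_one).exists
  have hsegment := (convex_convexHull ℝ (W : Set Pt)).openSegment_self_interior_subset_interior
    (subset_convexHull ℝ _ hhW) hy
  refine eq_of_mem_interior hW hW' (hsegment ?_) ?_ (z := AffineMap.lineMap h y t)
  · rw [openSegment_eq_image_lineMap]
    exact Set.mem_image_of_mem _ ht01
  · refine mem_of_orient_nonneg (convex_convexHull ℝ _) (subset_convexHull ℝ _ hhW')
      (subset_convexHull ℝ _ hp) (subset_convexHull ℝ _ hq) hpos ?_ ht.le ?_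
    · rw [orient_lineMap, orient_self_left]
      linarith [mul_nonneg ht01.1.le hpy]
    · rw [orient_lineMap, orient_self_right]
      linarith [mul_nonneg ht01.1.le hqy]

end ConvexQuadrangulation

/-! ### Alternating polygons admit no ear -/

/-- The increasing index triples that sit at a reflex vertex of an alternating polygon with
vertices `x 0, …, x (N - 1)`: the reflex vertices are those of even index, and the vertex `x 0`
contributes the triple `x (N - 1), x 0, x 1` in cyclically shifted order. -/
def IsReflexTriple (N a b c : ℕ) : Prop :=
  (a % 2 = 1 ∧ b = a + 1 ∧ c = a + 2) ∨ (a = 0 ∧ b = 1 ∧ c + 1 = N)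

/-- A counterclockwise polygon `x 0, …, x (N - 1)` which is reflex at the vertices of even index
and otherwise has the order type of a convex polygon. -/
structure AlternatingPolygon (N : ℕ) (x : ℕ → Pt) : Prop where
  four_le : 4 ≤ N
  orient_pos : ∀ {a b c}, a < b → b < c → c < N → ¬ IsReflexTriple N a b c →
    0 < orient (x a) (x b) (x c)
  orient_neg : ∀ {a b c}, a < b → b < c → c < N → IsReflexTriple N a b c →
    orient (x a) (x b) (x c) < 0

/-- The index pairs for which the chord `x i x j` of an alternating polygon cuts off the vertices
`x i, …, x j`. The pair `1, N - 1` is excluded because of the reflex vertex `x 0`. -/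
def IsChord (N i j : ℕ) : Prop := i + 2 ≤ j ∧ j < N ∧ ¬ (i = 1 ∧ j + 1 = N)

theorem generalPosition_image_of_orient_ne_zero {N : ℕ} {x : ℕ → Pt}
    (h : ∀ a b c, a < b → b < c → c < N → orient (x a) (x b) (x c) ≠ 0) :
    GeneralPosition (x '' Set.Iio N) := by
  rintro _ ⟨a, ha, rfl⟩ _ ⟨b, hb, rfl⟩ _ ⟨c, hc, rfl⟩ hab hac hbc
  simp only [Set.mem_Iio] at ha hb hc
  have hab : a ≠ b := ne_of_apply_ne x hab
  have hac : a ≠ c := ne_of_apply_ne x hac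
  have hbc : b ≠ c := ne_of_apply_ne x hbc
  rcases lt_or_gt_of_ne hab with h₁ | h₁ <;> rcases lt_or_gt_of_ne hac with h₂ | h₂ <;>
    rcases lt_or_gt_of_ne hbc with h₃ | h₃
  · exact h a b c h₁ h₃ hc
  · simpa [orient_swap_right (x a) (x c) (x b)] using h a c b h₂ h₃ hb
  · omega
  · simpa [orient_rotate_right (x a) (x b) (x c)] using h c a b h₂ h₁ hb
  · simpa [orient_swap_left (x a) (x b) (x c)] using h b a c h₁ h₂ hc
  · omega
  · simpa [orient_rotate_left (x a) (x b) (x c)] using h b c a h₃ h₂ ha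
  · simpa [orient_reverse (x a) (x b) (x c)] using h c b a h₃ h₁ ha

theorem injOn_of_orient_ne_zero {N : ℕ} {x : ℕ → Pt} (hN : 3 ≤ N)
    (h : ∀ a b c, a < b → b < c → c < N → orient (x a) (x b) (x c) ≠ 0) :
    Set.InjOn x (Set.Iio N) := by
  have hlt : ∀ a b, a < b → b < N → x a ≠ x b := by
    intro a b hab hb
    by_cases hb' : b + 1 < N
    · exact (ne_of_orient_ne_zero (h a b (b + 1) hab b.lt_succ_self hb')).1
    · rcases a with _ | a
      · exact (ne_of_orient_ne_zero (h 0 1 b one_pos (by omega) hb)).2.1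
      · exact (ne_of_orient_ne_zero (h a (a + 1) b a.lt_succ_self hab hb)).2.2
  intro a ha b hb hab
  by_contra hne
  rcases lt_or_gt_of_ne hne with h' | h'
  · exact hlt a b h' hb hab
  · exact hlt b a h' ha hab.symm

namespace AlternatingPolygon

variable {N : ℕ} {x : ℕ → Pt} {i j m : ℕ}

theorem orient_ne_zero (hx : AlternatingPolygon N x) {a b c : ℕ} (hab : a < b) (hbc : b < c)
    (hc : c < N) : orient (x a) (x b) (x c) ≠ 0 := by
  by_cases h : IsReflexTriple N a b c
  · exact (hx.orient_neg hab hbc hc h).ne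
  · exact (hx.orient_pos hab hbc hc h).ne'

theorem generalPosition (hx : AlternatingPolygon N x) : GeneralPosition (x '' Set.Iio N) :=
  generalPosition_image_of_orient_ne_zero fun _ _ _ => hx.orient_ne_zero

theorem injOn (hx : AlternatingPolygon N x) : Set.InjOn x (Set.Iio N) :=
  injOn_of_orient_ne_zero (le_trans (by norm_num) hx.four_le) fun _ _ _ => hx.orient_ne_zero

theorem ne (hx : AlternatingPolygon N x) (hi : i < N) (hj : j < N) (hij : i ≠ j) : x i ≠ x j :=
  hx.injOn.ne hi hj hij

theorem mem_Icc_of_orient_nonneg (hx : AlternatingPolygon N x) (hij : IsChord N i j) (hm : m < N)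
    (h : 0 ≤ orient (x j) (x i) (x m)) : m ∈ Set.Icc i j := by
  obtain ⟨hij₂, hj, hne⟩ := hij
  constructor <;> by_contra! hlt
  · have := hx.orient_pos hlt (by omega) hj (by unfold IsReflexTriple; omega)
    rw [orient_reverse] at this
    linarith
  · have := hx.orient_pos (show i < j by omega) hlt hm (by unfold IsReflexTriple; omega)
    rw [orient_swap_left] at this
    linarith

theorem lt_and_lt_and_orient_pos_of_orient_nonneg (hx : AlternatingPolygon N x)
    (hij : IsChord N i j) {t : ℕ} (ht : t < N) (hside : 0 ≤ orient (x j) (x i) (x t))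
    (hti : x t ≠ x i) (htj : x t ≠ x j) : i < t ∧ t < j ∧ 0 < orient (x i) (x t) (x j) := by
  have hIcc := hx.mem_Icc_of_orient_nonneg hij ht hside
  obtain ⟨hij₂, hj, -⟩ := hij
  have hi : i < N := by omega
  refine ⟨hIcc.1.lt_of_ne (ne_of_apply_ne x hti.symm), hIcc.2.lt_of_ne (ne_of_apply_ne x htj), ?_⟩
  rw [← orient_rotate_right]
  exact hside.lt_of_ne' <| hx.generalPosition ⟨j, hj, rfl⟩ ⟨i, hi, rfl⟩ ⟨t, ht, rfl⟩
    (hx.ne hj hi (by omega)) htj.symm hti.symm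

theorem strictConvexQuad_of_mem_cells {P : Finset Pt} {Q : ConvexQuadrangulation P} {l : ℕ}
    (hx : AlternatingPolygon N x) (him : i < m) (hml : m < l) (hlj : l < j) (hj : j < N)
    (hW : quadVerts (x i, x m, x l, x j) ∈ Q.cells)
    (hm : 0 < orient (x i) (x m) (x j)) (hl : 0 < orient (x i) (x l) (x j)) :
    StrictConvexQuad (x i) (x m) (x l) (x j) := by
  have hind := ConvexQuadrangulation.convexIndependent_of_mem_cells hW
  have hmem : ∀ u, u = x i ∨ u = x m ∨ u = x l ∨ u = x j →
      u ∈ (quadVerts (x i, x m, x l, x j) : Set Pt) := fun u hu => by simpa [quadVerts] using hu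
  have hne : ∀ {a b}, a < b → b < N → x a ≠ x b := fun hab hb => hx.ne (hab.trans hb) hb hab.ne
  have himl : 0 < orient (x i) (x m) (x l) := by
    by_contra! hneg
    have href : IsReflexTriple N i m l := by
      by_contra hcon
      linarith [hx.orient_pos him hml (hlj.trans hj) hcon]
    have hmlj := hx.orient_pos hml hlj hj (by unfold IsReflexTriple at *; omega)
    have := exists_orient_neg_of_convexIndependent hind (hmem (x i) (by tauto))
      (hmem (x l) (by tauto)) (hmem (x j) (by tauto)) (hmem (x m) (by tauto)) (hne him (by omega))
      (hne hml (by omega)).symm (hne (hml.trans hlj) hj).symm hl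
    rw [orient_swap_right (x i) (x m), orient_rotate_left (x m), orient_rotate_right (x i)] at this
    grind
  have hmlj : 0 < orient (x m) (x l) (x j) := by
    by_contra! hneg
    have := exists_orient_neg_of_convexIndependent hind (hmem (x i) (by tauto))
      (hmem (x m) (by tauto)) (hmem (x j) (by tauto)) (hmem (x l) (by tauto))
      (hne (him.trans hml) (by omega)) (hne hml (by omega)) (hne hlj hj).symm hm
    rw [orient_swap_right (x m), orient_rotate_right (x i)] at this
    grind
  rw [strictConvexQuad_iff_orient_pos, orient_rotate_left (x i), orient_rotate_right (x i)]
  exact ⟨himl, hmlj, hl, hm⟩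

end AlternatingPolygon

/-- The polygon with vertex set `W` fills a dent: `a`, `b`, `c` are consecutive vertices of it, as
traversed with `W` on the right. -/
structure IsDentCell (W : Finset Pt) (a b c : Pt) : Prop where
  left_mem : a ∈ W
  mid_mem : b ∈ W
  right_mem : c ∈ W
  orient_neg : orient a b c < 0
  orient_left_nonneg : ∀ u ∈ W, 0 ≤ orient b a u
  orient_right_nonneg : ∀ u ∈ W, 0 ≤ orient c b u
  exists_orient_pos : ∃ u ∈ W, 0 < orient c a u

theorem StrictConvexQuad.isLeftEdge {a b c d : Pt} (h : StrictConvexQuad a b c d) :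
    IsLeftEdge (quadVerts (a, b, c, d)) a b := by
  rw [strictConvexQuad_iff_orient_pos] at h
  refine ⟨by simp [quadVerts], by simp [quadVerts], ?_, c, by simp [quadVerts], h.1⟩
  simpa [quadVerts, orient_rotate_right] using
    ⟨h.1.le, (orient_rotate_left d a b ▸ h.2.2.2).le⟩

theorem quadVerts_rotate (a b c d : Pt) : quadVerts (b, c, d, a) = quadVerts (a, b, c, d) := by
  ext
  simp only [quadVerts, Finset.mem_insert, Finset.mem_singleton]
  tauto

/-- A quadrangulation whose cells, apart from the dent cells `E a` and one triangle, have all their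
vertices on the alternating polygon `x`. The dent cell `E a` fills the dent at `x (a + 1)`, for odd
`a`, and the triangle the dent at `x 0`. -/
structure IsPeeled {P : Finset Pt} (Q : ConvexQuadrangulation P) (N : ℕ) (x : ℕ → Pt)
    (E : ℕ → Finset Pt) : Prop extends AlternatingPolygon N x where
  mem_convexHull : ∀ t < N, x t ∈ convexHull ℝ (P : Set Pt)
  dent_mem_cells : ∀ a, a % 2 = 1 → a + 2 < N → E a ∈ Q.cells
  isDentCell : ∀ a, a % 2 = 1 → a + 2 < N → IsDentCell (E a) (x a) (x (a + 1)) (x (a + 2))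
  triangle_mem_cells : {x 0, x 1, x (N - 1)} ∈ Q.cells
  exists_eq_vertex : ∀ W ∈ Q.cells, (∀ a, a % 2 = 1 → a + 2 < N → W ≠ E a) → ∀ z ∈ W,
    ∃ t < N, z = x t

namespace IsPeeled

open ConvexQuadrangulation

variable {P : Finset Pt} {Q : ConvexQuadrangulation P} {N : ℕ} {x : ℕ → Pt} {E : ℕ → Finset Pt}
  {i j : ℕ} {W : Finset Pt}

theorem exists_orient_pos (h : IsPeeled Q N x E) (hij : IsChord N i j) :
    ∃ w ∈ convexHull ℝ (P : Set Pt), 0 < orient (x j) (x i) w := by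
  obtain ⟨hij₂, hj, hne⟩ := hij
  by_cases hdent : i % 2 = 1 ∧ j = i + 2
  · obtain ⟨hi, rfl⟩ := hdent
    obtain ⟨u, hu, hpos⟩ := (h.isDentCell i hi hj).exists_orient_pos
    exact ⟨u, convexHull_subset (h.dent_mem_cells i hi hj) (subset_convexHull ℝ _ hu), hpos⟩
  have hfour := h.four_le
  obtain ⟨m, him, hmj, hm⟩ : ∃ m, i < m ∧ m < j ∧ ¬ IsReflexTriple N i m j := by
    unfold IsReflexTriple
    by_cases hclose : i = 0 ∧ j + 1 = N
    · exact ⟨2, by omega, by omega, by omega⟩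
    · exact ⟨i + 1, by omega, by omega, by omega⟩
  refine ⟨x m, h.mem_convexHull m (by omega), ?_⟩
  rw [orient_rotate_right]
  exact h.orient_pos him hmj hj hm

theorem ne_dent_of_midpoint_mem (h : IsPeeled Q N x E) (hij : IsChord N i j)
    (hmid : midpoint ℝ (x i) (x j) ∈ convexHull ℝ (W : Set Pt))
    (hW : ∀ u ∈ W, 0 ≤ orient (x j) (x i) u) {a : ℕ} (ha : a % 2 = 1) (haN : a + 2 < N) :
    W ≠ E a := by
  rintro rfl
  obtain ⟨ha_mem, hb_mem, hc_mem, hneg, hleft, hright, -⟩ := h.isDentCell a ha haN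
  have hia := h.mem_Icc_of_orient_nonneg hij (by omega) (hW _ ha_mem)
  have hcj := h.mem_Icc_of_orient_nonneg hij haN (hW _ hc_mem)
  obtain ⟨hij₂, hj, hne⟩ := hij
  simp only [Set.mem_Icc] at hia hcj
  have hm_left := orient_nonneg_of_mem_convexHull hleft hmid
  have hm_right := orient_nonneg_of_mem_convexHull hright hmid
  rw [orient_midpoint] at hm_left hm_right
  by_cases hj_eq : j = a + 2
  · subst hj_eq
    rcases hia.1.eq_or_lt with rfl | hlt
    · have := hW _ hb_mem
      rw [orient_rotate_right] at this
      linarith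
    · have := h.orient_pos (show i < a + 1 by omega) (by omega) haN
        (by unfold IsReflexTriple; omega)
      rw [orient_reverse, orient_self_left] at hm_right
      linarith
  · have hj_pos := h.orient_pos (Nat.lt_succ_self a) (show a + 1 < j by omega) hj
      (by unfold IsReflexTriple; omega)
    rw [orient_swap_left _ _ (x j)] at hm_left
    rcases hia.1.eq_or_lt with rfl | hlt
    · rw [orient_self_right] at hm_left
      linarith
    · have := h.orient_pos hlt (Nat.lt_succ_self a) (by omega) (by unfold IsReflexTriple; omega)
      rw [orient_reverse] at hm_left
      linarith

theorem card_triangle (h : IsPeeled Q N x E) : ({x 0, x 1, x (N - 1)} : Finset Pt).card = 3 := by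
  have hfour := h.four_le
  exact Finset.card_eq_three.2 ⟨_, _, _, h.ne (by omega) (by omega) (by omega),
    h.ne (by omega) (by omega) (by omega), h.ne (by omega) (by omega) (by omega), rfl⟩

theorem card_eq_four_of_orient_nonneg (h : IsPeeled Q N x E) (hij : IsChord N i j)
    (hWQ : W ∈ Q.cells) (hW : ∀ u ∈ W, 0 ≤ orient (x j) (x i) u) : W.card = 4 := by
  refine (card_eq_three_or_four hWQ).resolve_left fun hcard => ?_
  obtain rfl := eq_of_card_eq_three hWQ h.triangle_mem_cells hcard h.card_triangle
  have hfour := h.four_le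
  have hi := h.mem_Icc_of_orient_nonneg hij (by omega) (hW (x 0) (by simp))
  have hj := h.mem_Icc_of_orient_nonneg hij (by omega) (hW (x (N - 1)) (by simp))
  obtain rfl : i = 0 := by simpa using hi.1
  obtain rfl : j = N - 1 := le_antisymm (by have := hij.2.1; omega) hj.2
  have hpos := hW (x 1) (by simp)
  rw [orient_rotate_right] at hpos
  have := h.orient_neg (show 0 < 1 by omega) (show 1 < N - 1 by omega) (by omega)
    (Or.inr ⟨rfl, rfl, by omega⟩)
  linarith

theorem exists_cell_across_chord (h : IsPeeled Q N x E) (hij : IsChord N i j) (hWQ : W ∈ Q.cells)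
    (hedge : IsLeftEdge W (x i) (x j)) :
    ∃ W' ∈ Q.cells, W'.card = 4 ∧ x i ∈ W' ∧ x j ∈ W' ∧ (∀ u ∈ W', 0 ≤ orient (x j) (x i) u) ∧
      ∀ u ∈ W', ∃ t < N, u = x t := by
  obtain ⟨w, hw, hpos⟩ := h.exists_orient_pos hij
  obtain ⟨W', hW', hmid, hside⟩ := exists_cell_across hWQ hedge hw hpos
  have hvert : ∀ u ∈ W', ∃ t < N, u = x t := h.exists_eq_vertex W' hW' fun a ha haN =>
    h.ne_dent_of_midpoint_mem hij hmid hside ha haN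
  have hi : i < N := by have := hij.1; have := hij.2.1; omega
  have hne : x j ≠ x i := h.ne hij.2.1 hi (by have := hij.1; omega)
  obtain ⟨hj_mem, hi_mem⟩ := mem_and_mem_of_midpoint_mem_convexHull (s := (W' : Set Pt)) hne hside
    (by rwa [midpoint_comm]) fun u hu hu₀ => by
      obtain ⟨t, ht, rfl⟩ := hvert u hu
      by_contra! hcon
      exact h.generalPosition ⟨j, hij.2.1, rfl⟩ ⟨i, hi, rfl⟩ ⟨t, ht, rfl⟩ hne hcon.1.symm
        hcon.2.symm hu₀
  exact ⟨W', hW', h.card_eq_four_of_orient_nonneg hij hW' hside, hi_mem, hj_mem, hside, hvert⟩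

theorem exists_quadVerts_across_chord (h : IsPeeled Q N x E) (hij : IsChord N i j)
    (hWQ : W ∈ Q.cells) (hedge : IsLeftEdge W (x i) (x j)) :
    ∃ m l, i < m ∧ m < l ∧ l < j ∧ quadVerts (x i, x m, x l, x j) ∈ Q.cells ∧
      0 < orient (x i) (x m) (x j) ∧ 0 < orient (x i) (x l) (x j) := by
  obtain ⟨W', hW', hcard, hi_mem, hj_mem, hside, hvert⟩ := h.exists_cell_across_chord hij hWQ hedge
  have hj : j < N := hij.2.1
  have hi : i < N := by have := hij.1; omega
  have hne : x j ≠ x i := h.ne hj hi (by have := hij.1; omega)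
  obtain ⟨y, z, hyz, herase⟩ : ∃ y z, y ≠ z ∧ (W'.erase (x i)).erase (x j) = {y, z} := by
    rw [← Finset.card_eq_two, Finset.card_erase_of_mem (Finset.mem_erase.2 ⟨hne, hj_mem⟩),
      Finset.card_erase_of_mem hi_mem, hcard]
  have hW'_eq : ∀ u, u ∈ W' ↔ u = x i ∨ u = x j ∨ u = y ∨ u = z := by
    intro u
    have := Finset.ext_iff.1 herase u
    simp only [Finset.mem_erase, Finset.mem_insert, Finset.mem_singleton] at this
    grind
  have hbetween : ∀ u, u ∈ W' → u ≠ x i → u ≠ x j →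
      ∃ t, i < t ∧ t < j ∧ u = x t ∧ 0 < orient (x i) u (x j) := by
    intro u hu hui huj
    obtain ⟨t, ht, rfl⟩ := hvert u hu
    obtain ⟨hit, htj, hpos⟩ :=
      h.lt_and_lt_and_orient_pos_of_orient_nonneg hij ht (hside _ hu) hui huj
    exact ⟨t, hit, htj, rfl, hpos⟩
  have hy := Finset.ext_iff.1 herase y
  have hz := Finset.ext_iff.1 herase z
  simp only [Finset.mem_erase, Finset.mem_insert, Finset.mem_singleton, true_or, or_true,
    iff_true] at hy hz
  obtain ⟨m, him, hmj, rfl, hm⟩ := hbetween y hy.2.2 hy.2.1 hy.1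
  obtain ⟨l, hil, hlj, rfl, hl⟩ := hbetween z hz.2.2 hz.2.1 hz.1
  rcases lt_or_gt_of_ne (ne_of_apply_ne x hyz) with hml | hml
  · refine ⟨m, l, him, hml, hlj, ?_, hm, hl⟩
    rwa [show quadVerts (x i, x m, x l, x j) = W' by ext u; rw [hW'_eq]; simp [quadVerts]; tauto]
  · refine ⟨l, m, hil, hml, hmj, ?_, hl, hm⟩
    rwa [show quadVerts (x i, x l, x m, x j) = W' by ext u; rw [hW'_eq]; simp [quadVerts]; tauto]

theorem not_isLeftEdge_of_isChord (h : IsPeeled Q N x E) (hij : IsChord N i j) (hW : W ∈ Q.cells) :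
    ¬ IsLeftEdge W (x i) (x j) := by
  induction hn : j - i using Nat.strong_induction_on generalizing i j W with
  | _ n ih =>
    subst hn
    intro hedge
    obtain ⟨m, l, him, hml, hlj, hquad_mem, hm, hl⟩ := h.exists_quadVerts_across_chord hij hW hedge
    obtain ⟨-, hj, -⟩ := hij
    have hquad := h.strictConvexQuad_of_mem_cells him hml hlj hj hquad_mem hm hl
    have him' : m = i + 1 := by
      by_contra hne
      exact ih (m - i) (by omega) (by unfold IsChord; omega) hquad_mem rfl hquad.isLeftEdge
    have hml' : l = m + 1 := by
      by_contra hne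
      refine ih (l - m) (by omega) (by unfold IsChord; omega) hquad_mem rfl ?_
      simpa only [quadVerts_rotate] using hquad.rotate.isLeftEdge
    have hlj' : j = l + 1 := by
      by_contra hne
      refine ih (j - l) (by omega) (by unfold IsChord; omega) hquad_mem rfl ?_
      simpa only [quadVerts_rotate] using hquad.rotate.rotate.isLeftEdge
    -- Of four consecutive vertices, one of the two inner ones is reflex.
    rw [strictConvexQuad_iff_orient_pos] at hquad
    rcases Nat.mod_two_eq_zero_or_one i with hpar | hpar
    · have := h.orient_neg hml hlj hj (Or.inl ⟨by omega, by omega, by omega⟩)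
      linarith [hquad.2.1]
    · have := h.orient_neg him hml (by omega) (Or.inl ⟨hpar, by omega, by omega⟩)
      linarith [hquad.1]

theorem false (h : IsPeeled Q N x E) : False := by
  have hfour := h.four_le
  have hneg := h.orient_neg (show 0 < 1 by omega) (show 1 < N - 1 by omega) (by omega)
    (Or.inr ⟨rfl, rfl, by omega⟩)
  have hpos : 0 < orient (x 0) (x (N - 1)) (x 1) := by rw [orient_swap_right]; linarith
  refine h.not_isLeftEdge_of_isChord (i := 0) (j := N - 1) (by unfold IsChord; omega)
    h.triangle_mem_cells ⟨by simp, by simp, ?_, x 1, by simp, hpos⟩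
  simpa using hpos.le

end IsPeeled

/-! ### Round polygons -/

section RoundPolygon

theorem abs_det2_le (a b : Pt) : |det2 a b| ≤ 2 * ‖a‖ * ‖b‖ :=
  calc |det2 a b| ≤ |a.1 * b.2| + |a.2 * b.1| := abs_sub _ _
    _ = ‖a.1‖ * ‖b.2‖ + ‖a.2‖ * ‖b.1‖ := by simp only [abs_mul, Real.norm_eq_abs]
    _ ≤ ‖a‖ * ‖b‖ + ‖a‖ * ‖b‖ := by
      gcongr
      exacts [norm_fst_le a, norm_snd_le b, norm_snd_le a, norm_fst_le b]
    _ = 2 * ‖a‖ * ‖b‖ := by ring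

theorem exists_mem_Ico_of_periodic {α : Type*} {f : ℕ → α} {k : ℕ} (hf : Function.Periodic f k)
    (hk : 0 < k) (i j : ℕ) : ∃ m ∈ Set.Ico i (i + k), f m = f j := by
  have hlt := Nat.mod_lt (j + i * (k - 1)) hk
  refine ⟨i + (j + i * (k - 1)) % k, ⟨by omega, by omega⟩, ?_⟩
  obtain ⟨k, rfl⟩ : ∃ l, k = l + 1 := ⟨k - 1, by omega⟩
  rw [← hf.map_mod_nat, Nat.add_mod_mod,
    show i + (j + i * (k + 1 - 1)) = j + (k + 1) * i by simp only [Nat.add_sub_cancel]; ring,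
    Nat.add_mul_mod_self_left, hf.map_mod_nat]

theorem apply_add_eq_apply_mod_add {α : Type*} {f : ℕ → α} {k : ℕ}
    (hf : Function.Periodic f k) (i l : ℕ) : f (i + l) = f (i % k + l) :=
  (Function.Periodic.map_mod_nat (f := fun i => f (i + l))
    (fun i => by simp only [add_right_comm i k, hf _]) i).symm

theorem range_shift {α : Type*} {f : ℕ → α} {k : ℕ} (hf : Function.Periodic f k) (hk : 0 < k)
    (c : ℕ) : Set.range (fun j => f (c + j)) = Set.range f := by
  ext z
  refine ⟨fun ⟨j, hj⟩ => ⟨c + j, hj⟩, fun ⟨j, hj⟩ => ?_⟩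
  obtain ⟨m, hm, hmj⟩ := exists_mem_Ico_of_periodic hf hk c j
  exact ⟨m - c, by rw [← hj, ← hmj]; exact congrArg f (Nat.add_sub_cancel' hm.1)⟩

/-- The distance of `z` to the line through the vertices `v i` and `v (i + 1)`, scaled by the
length of this edge and positive on the left. -/
noncomputable def edgeHeight (v : ℕ → Pt) (i : ℕ) (z : Pt) : ℝ := orient (v i) (v (i + 1)) z

/-- The position of `z` relative to the line through the origin and the midpoint of the edge from
`v i` to `v (i + 1)`: negative on the side of `v i`, positive on the side of `v (i + 1)`. -/
noncomputable def edgeSide (v : ℕ → Pt) (i : ℕ) (z : Pt) : ℝ :=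
  det2 (midpoint ℝ (v i) (v (i + 1))) z

/-- The limit, as the dents of a polygon become flat, of the cyclic sequence that alternates
between the dents and the vertices: it starts at the midpoint of the edge from `v 0` to `v 1`. -/
noncomputable def idealCycle (v : ℕ → Pt) (t : ℕ) : Pt :=
  midpoint ℝ (v ((t + 1) / 2)) (v ((t + 2) / 2))

/-- A convex `k`-gon in the unit square around the origin, with quantitative convexity `γ`; its
vertices are indexed cyclically and counterclockwise. -/
structure RoundPolygon (k : ℕ) (v : ℕ → Pt) (γ : ℝ) : Prop where
  four_le : 4 ≤ k
  periodic : Function.Periodic v k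
  orient_pos : ∀ {a b c}, a < b → b < c → c < a + k → 0 < orient (v a) (v b) (v c)
  pos : 0 < γ
  le_edgeHeight : ∀ {i j}, i + 1 < j → j < i + k → γ ≤ edgeHeight v i (v j)
  le_det2 : ∀ i, γ ≤ det2 (v i) (v (i + 1))
  norm_le : ∀ i, ‖v i‖ ≤ 1

variable {k : ℕ} {v : ℕ → Pt} {γ : ℝ}

@[simp] theorem edgeHeight_left (v : ℕ → Pt) (i : ℕ) : edgeHeight v i (v i) = 0 :=
  orient_self_left _ _

@[simp] theorem edgeHeight_right (v : ℕ → Pt) (i : ℕ) : edgeHeight v i (v (i + 1)) = 0 :=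
  orient_self_right _ _

theorem det2_midpoint_left (a b z : Pt) :
    det2 (midpoint ℝ a b) z = (det2 a z + det2 b z) / 2 := by
  simp only [det2, midpoint_eq_smul_add, invOf_eq_inv, Prod.smul_fst, Prod.smul_snd, Prod.fst_add,
    Prod.snd_add, smul_eq_mul]
  ring

theorem edgeSide_left (v : ℕ → Pt) (i : ℕ) :
    edgeSide v i (v i) = -(det2 (v i) (v (i + 1)) / 2) := by
  rw [edgeSide, det2_midpoint_left]; simp only [det2]; ring

theorem edgeSide_right (v : ℕ → Pt) (i : ℕ) :
    edgeSide v i (v (i + 1)) = det2 (v i) (v (i + 1)) / 2 := by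
  rw [edgeSide, det2_midpoint_left]; simp only [det2]; ring

theorem edgeSide_lineMap (v : ℕ → Pt) (i : ℕ) (s : ℝ) :
    edgeSide v i (AffineMap.lineMap (v i) (v (i + 1)) s) =
      det2 (v i) (v (i + 1)) * (s - 1 / 2) := by
  rw [edgeSide, det2_midpoint_left]
  simp only [det2, AffineMap.lineMap_apply_module, Prod.fst_add, Prod.snd_add, Prod.smul_fst,
    Prod.smul_snd, smul_eq_mul]
  ring

theorem orient_midpoint_midpoint_midpoint (a a' b b' c c' : Pt) :
    orient (midpoint ℝ a a') (midpoint ℝ b b') (midpoint ℝ c c') =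
      (orient a b c + orient a b c' + orient a b' c + orient a b' c' + orient a' b c +
        orient a' b c' + orient a' b' c + orient a' b' c') / 8 := by
  simp only [orient_eq, midpoint_eq_smul_add, invOf_eq_inv, Prod.smul_fst, Prod.smul_snd,
    Prod.fst_add, Prod.snd_add, smul_eq_mul]
  ring

theorem exists_lt_lt_lt_of_not_isReflexTriple (hk : 3 ≤ k) {a b d : ℕ} (hab : a < b) (hbd : b < d)
    (hd : d < 2 * k) (habd : ¬ IsReflexTriple (2 * k) a b d) :
    ∃ α β δ, (α = (a + 1) / 2 ∨ α = (a + 2) / 2) ∧ (β = (b + 1) / 2 ∨ β = (b + 2) / 2) ∧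
      (δ = (d + 1) / 2 ∨ δ = (d + 2) / 2) ∧ α < β ∧ β < δ ∧ δ < α + k := by
  unfold IsReflexTriple at habd
  by_contra! hcon
  have c (α β δ : ℕ) := hcon α β δ
  have := c _ _ _ (.inl rfl) (.inl rfl) (.inl rfl)
  have := c _ _ _ (.inl rfl) (.inl rfl) (.inr rfl)
  have := c _ _ _ (.inl rfl) (.inr rfl) (.inl rfl)
  have := c _ _ _ (.inl rfl) (.inr rfl) (.inr rfl)
  have := c _ _ _ (.inr rfl) (.inl rfl) (.inl rfl)
  have := c _ _ _ (.inr rfl) (.inl rfl) (.inr rfl)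
  have := c _ _ _ (.inr rfl) (.inr rfl) (.inl rfl)
  have := c _ _ _ (.inr rfl) (.inr rfl) (.inr rfl)
  omega

namespace RoundPolygon

theorem shift (h : RoundPolygon k v γ) (c : ℕ) : RoundPolygon k (fun j => v (c + j)) γ where
  four_le := h.four_le
  periodic j := by simpa only [add_assoc] using h.periodic (c + j)
  orient_pos hab hbc hca := h.orient_pos (by omega) (by omega) (by omega)
  pos := h.pos
  le_edgeHeight hij hji := h.le_edgeHeight (i := c + _) (by omega) (by omega)
  le_det2 i := h.le_det2 (c + i)
  norm_le i := h.norm_le (c + i)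

theorem det2_le_two (h : RoundPolygon k v γ) (i : ℕ) : det2 (v i) (v (i + 1)) ≤ 2 :=
  calc det2 (v i) (v (i + 1)) ≤ 2 * ‖v i‖ * ‖v (i + 1)‖ :=
        (le_abs_self _).trans (abs_det2_le _ _)
    _ ≤ 2 * 1 * 1 := by gcongr <;> exact h.norm_le _
    _ = 2 := by norm_num

theorem le_two (h : RoundPolygon k v γ) : γ ≤ 2 := (h.le_det2 0).trans (h.det2_le_two 0)

theorem norm_midpoint_le (h : RoundPolygon k v γ) (i j : ℕ) : ‖midpoint ℝ (v i) (v j)‖ ≤ 1 := by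
  simpa using (convex_closedBall (0 : Pt) 1).midpoint_mem
    (mem_closedBall_zero_iff.2 (h.norm_le i)) (mem_closedBall_zero_iff.2 (h.norm_le j))

theorem ne_succ (h : RoundPolygon k v γ) (i : ℕ) : v i ≠ v (i + 1) := fun hv => by
  have := h.le_det2 i
  rw [← hv, show det2 (v i) (v i) = 0 by simp only [det2]; ring] at this
  exact h.pos.not_ge this

theorem orient_nonneg (h : RoundPolygon k v γ) {a b c : ℕ} (hab : a ≤ b) (hbc : b ≤ c)
    (hca : c ≤ a + k) : 0 ≤ orient (v a) (v b) (v c) := by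
  rcases hab.eq_or_lt with rfl | hab
  · rw [orient_self]
  rcases hbc.eq_or_lt with rfl | hbc
  · rw [orient_self_right]
  rcases hca.eq_or_lt with rfl | hca
  · rw [h.periodic, orient_self_left]
  exact (h.orient_pos hab hbc hca).le

theorem orient_idealCycle_pos (h : RoundPolygon k v γ) {a b d : ℕ} (hab : a < b) (hbd : b < d)
    (hd : d < 2 * k) (habd : ¬ IsReflexTriple (2 * k) a b d) :
    0 < orient (idealCycle v a) (idealCycle v b) (idealCycle v d) := by
  have hk := h.four_le
  have nonneg {α β δ : ℕ} (hα : α = (a + 1) / 2 ∨ α = (a + 2) / 2)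
      (hβ : β = (b + 1) / 2 ∨ β = (b + 2) / 2) (hδ : δ = (d + 1) / 2 ∨ δ = (d + 2) / 2) :
      0 ≤ orient (v α) (v β) (v δ) := h.orient_nonneg (by omega) (by omega) (by omega)
  have h₁ := nonneg (.inl rfl) (.inl rfl) (.inl rfl)
  have h₂ := nonneg (.inl rfl) (.inl rfl) (.inr rfl)
  have h₃ := nonneg (.inl rfl) (.inr rfl) (.inl rfl)
  have h₄ := nonneg (.inl rfl) (.inr rfl) (.inr rfl)
  have h₅ := nonneg (.inr rfl) (.inl rfl) (.inl rfl)
  have h₆ := nonneg (.inr rfl) (.inl rfl) (.inr rfl)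
  have h₇ := nonneg (.inr rfl) (.inr rfl) (.inl rfl)
  have h₈ := nonneg (.inr rfl) (.inr rfl) (.inr rfl)
  obtain ⟨α, β, δ, hα, hβ, hδ, hαβ, hβδ, hδα⟩ :=
    exists_lt_lt_lt_of_not_isReflexTriple (by omega) hab hbd hd habd
  have pos := h.orient_pos hαβ hβδ hδα
  simp only [idealCycle, orient_midpoint_midpoint_midpoint]
  rcases hα with rfl | rfl <;> rcases hβ with rfl | rfl <;> rcases hδ with rfl | rfl <;> linarith

end RoundPolygon

end RoundPolygon

/-! ### Dented polygons -/

section DentedPolygon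

/-- The midpoint of the edge from `v j` to `v (j + 1)`, pulled slightly towards the origin. -/
noncomputable def dent (ε : ℝ) (v : ℕ → Pt) (j : ℕ) : Pt :=
  (1 - ε) • midpoint ℝ (v j) (v (j + 1))

/-- A round polygon together with its dents, forming the point set `P`. The dents are so flat, and
the tolerances `ρ` for distances and `η` for edge heights so small, that all separation arguments
go through and moving points of the `idealCycle` by at most `ρ` preserves the orientations. -/
structure DentedPolygon (k : ℕ) (P : Finset Pt) (v : ℕ → Pt) (γ ρ η ε : ℝ) : Prop
    extends RoundPolygon k v γ where
  rho_pos : 0 < ρ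
  rho_le : ρ ≤ γ / 8
  eta_pos : 0 < η
  eta_le : η ≤ ρ * γ / 8
  eps_pos : 0 < ε
  eps_lt : 32 * ε < γ * η
  coe_eq : (P : Set Pt) = Set.range v ∪ Set.range (dent ε v)
  orient_pos_of_dist_le : ∀ (c : ℕ) (x : ℕ → Pt),
    (∀ t < 2 * k, dist (x t) (idealCycle (fun j => v (c + j)) t) ≤ ρ) → ∀ {a b d}, a < b → b < d →
      d < 2 * k → ¬ IsReflexTriple (2 * k) a b d → 0 < orient (x a) (x b) (x d)

variable {k : ℕ} {P : Finset Pt} {v : ℕ → Pt} {γ ρ η ε : ℝ} {i j : ℕ} {z : Pt}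

theorem RoundPolygon.periodic_dent (h : RoundPolygon k v γ) : Function.Periodic (dent ε v) k :=
  fun j => by rw [dent, dent, h.periodic, add_right_comm, h.periodic]

theorem orient_dent (a b : Pt) (ε : ℝ) (v : ℕ → Pt) (j : ℕ) :
    orient a b (dent ε v j) =
      (1 - ε) * orient a b (midpoint ℝ (v j) (v (j + 1))) + ε * det2 a b := by
  simp only [dent, orient_eq, det2, Prod.smul_fst, Prod.smul_snd, smul_eq_mul]
  ring

theorem edgeHeight_dent (ε : ℝ) (v : ℕ → Pt) (i j : ℕ) :
    edgeHeight v i (dent ε v j) =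
      (1 - ε) * ((edgeHeight v i (v j) + edgeHeight v i (v (j + 1))) / 2) +
        ε * det2 (v i) (v (i + 1)) := by
  rw [edgeHeight, orient_dent, orient_midpoint]; rfl

theorem edgeHeight_dent_self (ε : ℝ) (v : ℕ → Pt) (i : ℕ) :
    edgeHeight v i (dent ε v i) = ε * det2 (v i) (v (i + 1)) := by
  rw [edgeHeight_dent, edgeHeight_left, edgeHeight_right]; ring

namespace DentedPolygon

theorem eta_lt (h : DentedPolygon k P v γ ρ η ε) : η < γ / 4 := by
  nlinarith [h.pos, h.le_two, h.rho_le, h.eta_le]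

theorem eps_le_rho (h : DentedPolygon k P v γ ρ η ε) : ε ≤ ρ := by
  have h₁ : γ * η ≤ 2 * η := mul_le_mul_of_nonneg_right h.le_two h.eta_pos.le
  have h₂ : ρ * γ ≤ ρ * 2 := mul_le_mul_of_nonneg_left h.le_two h.rho_pos.le
  linarith [h.eps_lt, h.eta_le, h.rho_pos]

theorem eps_lt_one (h : DentedPolygon k P v γ ρ η ε) : ε < 1 := by
  linarith [h.eps_le_rho, h.rho_le, h.le_two]

theorem shift (h : DentedPolygon k P v γ ρ η ε) (c : ℕ) :
    DentedPolygon k P (fun j => v (c + j)) γ ρ η ε where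
  toRoundPolygon := h.toRoundPolygon.shift c
  rho_pos := h.rho_pos
  rho_le := h.rho_le
  eta_pos := h.eta_pos
  eta_le := h.eta_le
  eps_pos := h.eps_pos
  eps_lt := h.eps_lt
  coe_eq := by
    have hk : 0 < k := by linarith [h.four_le]
    rw [h.coe_eq, range_shift h.periodic hk, ← range_shift h.periodic_dent hk c]
    rfl
  orient_pos_of_dist_le d x hx :=
    h.orient_pos_of_dist_le (c + d) x (by simpa only [add_assoc] using hx)

theorem vertex_mem (h : DentedPolygon k P v γ ρ η ε) (j : ℕ) : v j ∈ P := by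
  rw [← Finset.mem_coe, h.coe_eq]; exact .inl ⟨j, rfl⟩

theorem dent_mem (h : DentedPolygon k P v γ ρ η ε) (j : ℕ) : dent ε v j ∈ P := by
  rw [← Finset.mem_coe, h.coe_eq]; exact .inr ⟨j, rfl⟩

theorem exists_index (h : DentedPolygon k P v γ ρ η ε) (hz : z ∈ P) (i : ℕ) :
    ∃ j ∈ Set.Ico i (i + k), z = v j ∨ z = dent ε v j := by
  have hk : 0 < k := by linarith [h.four_le]
  rw [← Finset.mem_coe, h.coe_eq] at hz
  obtain ⟨j, rfl⟩ | ⟨j, rfl⟩ := hz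
  · obtain ⟨m, hm, hmj⟩ := exists_mem_Ico_of_periodic h.periodic hk i j
    exact ⟨m, hm, .inl hmj.symm⟩
  · obtain ⟨m, hm, hmj⟩ := exists_mem_Ico_of_periodic h.periodic_dent hk i j
    exact ⟨m, hm, .inr hmj.symm⟩

theorem edgeHeight_dent_pos (h : DentedPolygon k P v γ ρ η ε) (i : ℕ) :
    0 < edgeHeight v i (dent ε v i) := by
  rw [edgeHeight_dent_self]; exact mul_pos h.eps_pos (h.pos.trans_le (h.le_det2 i))

theorem half_le_edgeHeight_dent (h : DentedPolygon k P v γ ρ η ε) (hij : i < j) (hji : j < i + k) :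
    γ / 2 ≤ edgeHeight v i (dent ε v j) := by
  have hk := h.four_le
  have hsum : γ ≤ edgeHeight v i (v j) + edgeHeight v i (v (j + 1)) := by
    rcases (Nat.succ_le_of_lt hij).eq_or_lt with rfl | hij
    · rw [edgeHeight_right, zero_add]
      exact h.le_edgeHeight (by omega) (by omega)
    · have hj := h.le_edgeHeight hij hji
      rcases (show j + 1 ≤ i + k from hji).eq_or_lt with hji | hji
      · rwa [hji, h.periodic, edgeHeight_left, add_zero]
      · have := h.le_edgeHeight (i := i) (j := j + 1) (by omega) hji
        linarith [h.pos]
  rw [edgeHeight_dent]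
  have h₁ := mul_le_mul_of_nonneg_left hsum (sub_nonneg.2 h.eps_lt_one.le)
  have h₂ := mul_le_mul_of_nonneg_left (h.le_det2 i) h.eps_pos.le
  linarith [mul_pos h.eps_pos h.pos]

theorem eq_or_half_le_edgeHeight (h : DentedPolygon k P v γ ρ η ε) (hz : z ∈ P) (i : ℕ) :
    z = v i ∨ z = v (i + 1) ∨ z = dent ε v i ∨ γ / 2 ≤ edgeHeight v i z := by
  obtain ⟨j, ⟨hij, hji⟩, rfl | rfl⟩ := h.exists_index hz i
  · rcases hij.eq_or_lt with rfl | hij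
    · exact .inl rfl
    rcases (Nat.succ_le_of_lt hij).eq_or_lt with rfl | hij
    · exact .inr (.inl rfl)
    · exact .inr (.inr (.inr (by linarith [h.le_edgeHeight hij hji, h.pos])))
  · rcases hij.eq_or_lt with rfl | hij
    · exact .inr (.inr (.inl rfl))
    · exact .inr (.inr (.inr (h.half_le_edgeHeight_dent hij hji)))

theorem eq_of_edgeHeight_le (h : DentedPolygon k P v γ ρ η ε) (hz : z ∈ P)
    (hi : edgeHeight v i z ≤ η) : z = v i ∨ z = v (i + 1) ∨ z = dent ε v i := by
  rcases h.eq_or_half_le_edgeHeight hz i with hz | hz | hz | hz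
  exacts [.inl hz, .inr (.inl hz), .inr (.inr hz), by linarith [h.eta_lt, h.pos]]

theorem edgeHeight_nonneg_of_mem (h : DentedPolygon k P v γ ρ η ε) (hz : z ∈ P) (i : ℕ) :
    0 ≤ edgeHeight v i z := by
  rcases h.eq_or_half_le_edgeHeight hz i with rfl | rfl | rfl | hz
  exacts [(edgeHeight_left v i).ge, (edgeHeight_right v i).ge, (h.edgeHeight_dent_pos i).le,
    (half_pos h.pos).le.trans hz]

theorem edgeHeight_nonneg (h : DentedPolygon k P v γ ρ η ε) (hz : z ∈ convexHull ℝ (P : Set Pt))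
    (i : ℕ) : 0 ≤ edgeHeight v i z :=
  orient_nonneg_of_mem_convexHull (fun _ hw => h.edgeHeight_nonneg_of_mem hw i) hz

theorem vertex_mem_convexHull (h : DentedPolygon k P v γ ρ η ε) (j : ℕ) :
    v j ∈ convexHull ℝ (P : Set Pt) :=
  subset_convexHull ℝ _ (h.vertex_mem j)

theorem norm_dent_le (h : DentedPolygon k P v γ ρ η ε) (j : ℕ) : ‖dent ε v j‖ ≤ 1 := by
  rw [dent, norm_smul, Real.norm_of_nonneg (sub_nonneg.2 h.eps_lt_one.le)]
  exact mul_le_one₀ (by linarith [h.eps_pos]) (norm_nonneg _) (h.norm_midpoint_le _ _)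

theorem norm_le_of_mem_convexHull (h : DentedPolygon k P v γ ρ η ε)
    (hz : z ∈ convexHull ℝ (P : Set Pt)) : ‖z‖ ≤ 1 := by
  have hP : (P : Set Pt) ⊆ Metric.closedBall 0 1 := by
    rw [h.coe_eq]
    rintro _ (⟨j, rfl⟩ | ⟨j, rfl⟩) <;> rw [mem_closedBall_zero_iff]
    exacts [h.norm_le j, h.norm_dent_le j]
  exact mem_closedBall_zero_iff.1 (convexHull_min hP (convex_closedBall 0 1) hz)

theorem dist_le_two (h : DentedPolygon k P v γ ρ η ε) {w : Pt}
    (hz : z ∈ convexHull ℝ (P : Set Pt)) (hw : w ∈ convexHull ℝ (P : Set Pt)) : dist z w ≤ 2 := by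
  linarith [dist_le_norm_add_norm z w, h.norm_le_of_mem_convexHull hz,
    h.norm_le_of_mem_convexHull hw]

theorem dist_dent_midpoint_le (h : DentedPolygon k P v γ ρ η ε) (j : ℕ) :
    dist (dent ε v j) (midpoint ℝ (v j) (v (j + 1))) ≤ ρ := by
  have : dent ε v j - midpoint ℝ (v j) (v (j + 1)) = (-ε) • midpoint ℝ (v j) (v (j + 1)) := by
    rw [dent]; module
  rw [dist_eq_norm, this, norm_smul, norm_neg, Real.norm_of_nonneg h.eps_pos.le]
  exact (mul_le_of_le_one_right h.eps_pos.le (h.norm_midpoint_le _ _)).trans h.eps_le_rho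

theorem half_le_edgeHeight_add_of_mem (h : DentedPolygon k P v γ ρ η ε) (hij : i < j)
    (hji : j < i + k) (hz : z ∈ P) (hzj : z = v (i + 1) → i + 1 < j)
    (hzi : z = v i → j + 1 < i + k) :
    γ / 2 ≤ edgeHeight v i z + edgeHeight v j z := by
  have hi := h.edgeHeight_nonneg_of_mem hz i
  have hj := h.edgeHeight_nonneg_of_mem hz j
  rcases h.eq_or_half_le_edgeHeight hz i with rfl | rfl | rfl | hz
  · have := h.le_edgeHeight (hzi rfl) (show i + k < j + k by omega)
    rw [h.periodic] at this
    linarith [h.pos]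
  · have := h.le_edgeHeight (i := j) (j := i + 1 + k) (by omega) (by have := hzj rfl; omega)
    rw [h.periodic] at this
    linarith [h.pos]
  · have := h.half_le_edgeHeight_dent hji (show i + k < j + k by omega)
    rw [h.periodic_dent] at this
    linarith
  · linarith

theorem adjacent_of_edgeHeight_le (h : DentedPolygon k P v γ ρ η ε) (hij : i < j) (hji : j < i + k)
    (hz : z ∈ convexHull ℝ (P : Set Pt)) (hi : edgeHeight v i z ≤ η) (hj : edgeHeight v j z ≤ η) :
    j = i + 1 ∨ j + 1 = i + k := by
  by_contra! hne
  have hconv : Convex ℝ {w | γ / 2 ≤ edgeHeight v i w + edgeHeight v j w} :=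
    (convex_Ici (γ / 2)).affine_preimage
      (orientAffine (v i) (v (i + 1)) + orientAffine (v j) (v (j + 1)))
  have hz : γ / 2 ≤ edgeHeight v i z + edgeHeight v j z := convexHull_min (fun w hw =>
    h.half_le_edgeHeight_add_of_mem hij hji hw (fun _ => by omega) fun _ => by omega) hconv hz
  linarith [h.eta_lt]

/-- In `z`, the left side is convex and the right side affine, so `z ∈ P` may be assumed. -/
theorem dist_vertex_le_mul (h : DentedPolygon k P v γ ρ η ε) (hz : z ∈ convexHull ℝ (P : Set Pt))
    (i : ℕ) : dist z (v (i + 1)) ≤ 4 / γ * (edgeHeight v i z + edgeHeight v (i + 1) z) := by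
  have hk := h.four_le
  have hγ := h.pos
  have hconv : ConvexOn ℝ Set.univ fun w =>
      dist w (v (i + 1)) + -(4 / γ) * (edgeHeight v i w + edgeHeight v (i + 1) w) :=
    (convexOn_dist _ convex_univ).add ((convexOn_id convex_univ).comp_affineMap
      (-(4 / γ) • (orientAffine (v i) (v (i + 1)) + orientAffine (v (i + 1)) (v (i + 1 + 1)))))
  obtain ⟨w, hw, hzw⟩ := hconv.exists_ge_of_mem_convexHull (Set.subset_univ _) hz
  suffices dist w (v (i + 1)) ≤ 4 / γ * (edgeHeight v i w + edgeHeight v (i + 1) w) by linarith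
  by_cases hwv : w = v (i + 1)
  · simp [hwv]
  calc dist w (v (i + 1)) ≤ 2 :=
        h.dist_le_two (subset_convexHull ℝ _ hw) (h.vertex_mem_convexHull _)
    _ = 4 / γ * (γ / 2) := by field_simp; norm_num
    _ ≤ _ := by
      gcongr
      exact h.half_le_edgeHeight_add_of_mem (by omega) (by omega) hw (absurd · hwv)
        fun _ => by omega

theorem dist_vertex_le (h : DentedPolygon k P v γ ρ η ε) (hz : z ∈ convexHull ℝ (P : Set Pt))
    (hi : edgeHeight v i z ≤ η) (hi' : edgeHeight v (i + 1) z ≤ η) : dist z (v (i + 1)) ≤ ρ := by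
  have hγ := h.pos
  calc dist z (v (i + 1)) ≤ 4 / γ * (edgeHeight v i z + edgeHeight v (i + 1) z) :=
        h.dist_vertex_le_mul hz i
    _ ≤ 4 / γ * (ρ * γ / 8 + ρ * γ / 8) := by gcongr <;> linarith [h.eta_le]
    _ = ρ := by field_simp; ring

theorem abs_edgeSide_sub_le (h : DentedPolygon k P v γ ρ η ε) {w : Pt} (hz : dist z w ≤ ρ) (i : ℕ) :
    |edgeSide v i z - edgeSide v i w| ≤ γ / 4 := by
  have : edgeSide v i z - edgeSide v i w = det2 (midpoint ℝ (v i) (v (i + 1))) (z - w) := by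
    simp only [edgeSide, det2, Prod.fst_sub, Prod.snd_sub]; ring
  rw [this]
  rw [dist_eq_norm] at hz
  calc _ ≤ 2 * ‖midpoint ℝ (v i) (v (i + 1))‖ * ‖z - w‖ := abs_det2_le _ _
    _ ≤ 2 * 1 * ρ := by gcongr; exact h.norm_midpoint_le _ _
    _ ≤ γ / 4 := by linarith [h.rho_le]

theorem edgeSide_le_of_dist_le (h : DentedPolygon k P v γ ρ η ε) (hz : dist z (v i) ≤ ρ) :
    edgeSide v i z ≤ -(γ / 4) := by
  have := (abs_le.1 (h.abs_edgeSide_sub_le hz i)).2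
  rw [edgeSide_left] at this
  linarith [h.le_det2 i]

theorem le_edgeSide_of_dist_le (h : DentedPolygon k P v γ ρ η ε) (hz : dist z (v (i + 1)) ≤ ρ) :
    γ / 4 ≤ edgeSide v i z := by
  have := (abs_le.1 (h.abs_edgeSide_sub_le hz i)).1
  rw [edgeSide_right] at this
  linarith [h.le_det2 i]

theorem orient_midpoint_sub_le_orient_dent (h : DentedPolygon k P v γ ρ η ε) {a b : Pt}
    (ha : a ∈ convexHull ℝ (P : Set Pt)) (hb : b ∈ convexHull ℝ (P : Set Pt)) (i : ℕ) :
    orient a b (midpoint ℝ (v i) (v (i + 1))) - 4 * ε ≤ orient a b (dent ε v i) := by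
  set m := midpoint ℝ (v i) (v (i + 1)) with hm
  have heq : orient a b (dent ε v i) = orient a b m - ε * det2 (b - a) m := by
    rw [orient_dent, ← hm]; simp only [orient_eq, det2, Prod.fst_sub, Prod.snd_sub]; ring
  have hle : det2 (b - a) m ≤ 4 :=
    calc det2 (b - a) m ≤ 2 * ‖b - a‖ * ‖m‖ := (le_abs_self _).trans (abs_det2_le _ _)
      _ ≤ 2 * 2 * 1 := by
        gcongr
        exacts [(dist_eq_norm b a).ge.trans (h.dist_le_two hb ha), h.norm_midpoint_le _ _]
      _ = 4 := by norm_num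
  linarith [mul_le_mul_of_nonneg_left hle h.eps_pos.le]

theorem exists_eq_lineMap (h : DentedPolygon k P v γ ρ η ε) (hz : edgeHeight v i z = 0) :
    ∃ t, z = AffineMap.lineMap (v i) (v (i + 1)) t ∧
      edgeSide v i z = det2 (v i) (v (i + 1)) * (t - 1 / 2) := by
  obtain ⟨t, rfl⟩ := exists_eq_lineMap_of_orient_eq_zero (h.ne_succ i) hz
  exact ⟨t, rfl, edgeSide_lineMap v i t⟩

/-- The triangle `l r c` is so high above the edge that it contains the dent. -/
theorem dent_mem_interior (h : DentedPolygon k P v γ ρ η ε) {K : Set Pt} (hK : Convex ℝ K)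
    (hKP : K ⊆ convexHull ℝ (P : Set Pt)) {l r c : Pt} (hl : l ∈ K) (hr : r ∈ K) (hc : c ∈ K)
    (hli : edgeHeight v i l = 0) (hri : edgeHeight v i r = 0)
    (hls : edgeSide v i l ≤ -(γ / 4)) (hrs : γ / 4 ≤ edgeSide v i r)
    (hci : η < edgeHeight v i c) : dent ε v i ∈ interior K := by
  have hγ := h.pos
  have hdet := h.le_det2 i
  have hdet2 := h.det2_le_two i
  have hη := h.eta_pos
  obtain ⟨s, hs, hls'⟩ := h.exists_eq_lineMap hli
  obtain ⟨t, ht, hrs'⟩ := h.exists_eq_lineMap hri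
  have hs2 : γ / 8 ≤ 1 / 2 - s := by nlinarith
  have ht2 : γ / 8 ≤ t - 1 / 2 := by nlinarith
  have hm : midpoint ℝ (v i) (v (i + 1)) = AffineMap.lineMap (v i) (v (i + 1)) (1 / 2 : ℝ) := by
    rw [midpoint, invOf_eq_inv, one_div]
  have hprod {x : ℝ} (hx : γ / 8 ≤ x) : 4 * ε < x * edgeHeight v i c :=
    calc 4 * ε < γ / 8 * η := by linarith [h.eps_lt]
      _ ≤ x * edgeHeight v i c := mul_le_mul hx hci.le hη.le (by linarith)
  have hrcm : orient r c (midpoint ℝ (v i) (v (i + 1))) = (t - 1 / 2) * edgeHeight v i c := by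
    rw [← orient_rotate_right, hm, ht, orient_lineMap_lineMap]; rfl
  have hclm : orient c l (midpoint ℝ (v i) (v (i + 1))) = (1 / 2 - s) * edgeHeight v i c := by
    rw [← orient_rotate_left, hm, hs, orient_lineMap_lineMap]; rfl
  have hlrp : orient l r (dent ε v i) = (t - s) * edgeHeight v i (dent ε v i) := by
    rw [hs, ht, orient_lineMap_lineMap]; rfl
  apply mem_interior_of_orient_pos hK hl hr hc
  · rw [hlrp]; exact mul_pos (by linarith) (h.edgeHeight_dent_pos i)
  · linarith [h.orient_midpoint_sub_le_orient_dent (hKP hr) (hKP hc) i, hprod ht2]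
  · linarith [h.orient_midpoint_sub_le_orient_dent (hKP hc) (hKP hl) i, hprod hs2]

end DentedPolygon

end DentedPolygon

/-! ### The cells along the edges -/

theorem exists_mem_le_of_mem_convexHull {E : Type*} [AddCommGroup E] [Module ℝ E] {s : Set E}
    {m : E} (f g : E →ᵃ[ℝ] ℝ) (hs : ∀ w ∈ s, f m ≤ f w) (hm : m ∈ convexHull ℝ s) :
    ∃ w ∈ s, f w = f m ∧ g w ≤ g m := by
  obtain ⟨w, ⟨hw, hfw⟩, hgw⟩ :=
    ((concaveOn_id convex_univ).comp_affineMap g).exists_le_of_mem_convexHull (Set.subset_univ _)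
      (mem_convexHull_setOf_eq f hs hm)
  exact ⟨w, hw, hfw, hgw⟩

/-- The edge from `v i` to `v (i + 1)` is served by the points that are low above it, excluding
those that lie on the edge near one of its ends. -/
def Serves (v : ℕ → Pt) (ρ η : ℝ) (i : ℕ) (z : Pt) : Prop :=
  edgeHeight v i z ≤ η ∧ (edgeHeight v i z = 0 → ρ < dist z (v i) ∧ ρ < dist z (v (i + 1)))

/-- `W` is a cell with vertices `l`, `r` on the edge from `v i` to `v (i + 1)`, and `W` is too flat
to go beyond the dent. -/
structure IsEdgeCell {P : Finset Pt} (Q : ConvexQuadrangulation P) (v : ℕ → Pt) (η ε : ℝ) (i : ℕ)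
    (W : Finset Pt) (l r : Pt) : Prop where
  mem_cells : W ∈ Q.cells
  left_mem : l ∈ W
  right_mem : r ∈ W
  edgeHeight_left : edgeHeight v i l = 0
  edgeHeight_right : edgeHeight v i r = 0
  left_eq_or_mem : l = v i ∨ l ∈ steinerPoints P Q
  right_eq_or_mem : r = v (i + 1) ∨ r ∈ steinerPoints P Q
  edgeHeight_le : ∀ c ∈ W, edgeHeight v i c ≤ η
  eq_or_mem : ∀ c ∈ W, c = l ∨ c = r ∨ c = dent ε v i ∨
    (c ∈ steinerPoints P Q ∧ 0 < edgeHeight v i c)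

section Serves

variable {k : ℕ} {P : Finset Pt} {v : ℕ → Pt} {γ ρ η ε : ℝ} {i j : ℕ} {z : Pt}
  {Q : ConvexQuadrangulation P} {W : Finset Pt} {l r : Pt}

namespace DentedPolygon

theorem edgeSide_midpoint (v : ℕ → Pt) (i : ℕ) :
    edgeSide v i (midpoint ℝ (v i) (v (i + 1))) = 0 := by
  simp only [edgeSide, det2]; ring

theorem exists_edgeSide_nonpos_nonneg (h : DentedPolygon k P v γ ρ η ε) (hW : W ∈ Q.cells)
    (hm : midpoint ℝ (v i) (v (i + 1)) ∈ convexHull ℝ (W : Set Pt)) :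
    (∃ l ∈ W, edgeHeight v i l = 0 ∧ edgeSide v i l ≤ 0) ∧
      ∃ r ∈ W, edgeHeight v i r = 0 ∧ 0 ≤ edgeSide v i r := by
  set m := midpoint ℝ (v i) (v (i + 1)) with hm_def
  have hheight : edgeHeight v i m = 0 := by
    rw [hm_def, edgeHeight, orient_midpoint, orient_self_left, orient_self_right]; norm_num
  have hnonneg : ∀ w ∈ (W : Set Pt), edgeHeight v i m ≤ edgeHeight v i w := fun w hw =>
    hheight.trans_le (h.edgeHeight_nonneg
      (ConvexQuadrangulation.convexHull_subset hW (subset_convexHull ℝ _ hw)) i)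
  have hside (z : Pt) : edgeSide v i z = orientAffine 0 m z := by
    simp [edgeSide, orientAffine, orient, hm_def]
  obtain ⟨l, hl, hl0, hls⟩ := exists_mem_le_of_mem_convexHull (orientAffine (v i) (v (i + 1)))
    (orientAffine 0 m) hnonneg hm
  obtain ⟨r, hr, hr0, hrs⟩ := exists_mem_le_of_mem_convexHull (orientAffine (v i) (v (i + 1)))
    (-orientAffine 0 m) hnonneg hm
  have hmid := edgeSide_midpoint v i
  rw [hside] at hmid
  refine ⟨⟨l, hl, hl0.trans hheight, ?_⟩, r, hr, hr0.trans hheight, ?_⟩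
  · rw [hside]; exact hls.trans_eq hmid
  · rw [hside]; exact hmid.ge.trans (neg_le_neg_iff.1 hrs)

theorem dist_le_of_mem_cells (h : DentedPolygon k P v γ ρ η ε)
    (hend : ∀ z ∈ steinerPoints P Q, edgeHeight v i z = 0 →
      dist z (v i) ≤ ρ ∨ dist z (v (i + 1)) ≤ ρ)
    (hW : W ∈ Q.cells) (hz : z ∈ W) (hz0 : edgeHeight v i z = 0) :
    (dist z (v i) ≤ ρ ∧ (z = v i ∨ z ∈ steinerPoints P Q)) ∨
      (dist z (v (i + 1)) ≤ ρ ∧ (z = v (i + 1) ∨ z ∈ steinerPoints P Q)) := by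
  rcases ConvexQuadrangulation.mem_or_mem_steinerPoints hW hz with hzP | hzS
  · rcases h.eq_of_edgeHeight_le hzP (hz0.trans_le h.eta_pos.le) with rfl | rfl | rfl
    · exact .inl ⟨(dist_self _).trans_le h.rho_pos.le, .inl rfl⟩
    · exact .inr ⟨(dist_self _).trans_le h.rho_pos.le, .inl rfl⟩
    · exact absurd hz0 (h.edgeHeight_dent_pos i).ne'
  · exact (hend z hzS hz0).imp (⟨·, .inr hzS⟩) (⟨·, .inr hzS⟩)

theorem edgeHeight_ne_zero_of_mem_cells (h : DentedPolygon k P v γ ρ η ε) (hW : W ∈ Q.cells)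
    (hl : l ∈ W) (hr : r ∈ W) (hz : z ∈ W) (hlr : l ≠ r) (hzl : z ≠ l) (hzr : z ≠ r)
    (hl0 : edgeHeight v i l = 0) (hr0 : edgeHeight v i r = 0) : edgeHeight v i z ≠ 0 := by
  intro hz0
  obtain ⟨s, hs, -⟩ := h.exists_eq_lineMap hl0
  obtain ⟨t, ht, -⟩ := h.exists_eq_lineMap hr0
  refine ConvexQuadrangulation.generalPosition_of_mem_cells hW hl hr hz hlr hzl.symm hzr.symm ?_
  rw [hs, ht, orient_lineMap_lineMap, ← edgeHeight, hz0, mul_zero]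

theorem exists_isEdgeCell (h : DentedPolygon k P v γ ρ η ε)
    (hend : ∀ z ∈ steinerPoints P Q, edgeHeight v i z = 0 →
      dist z (v i) ≤ ρ ∨ dist z (v (i + 1)) ≤ ρ) :
    ∃ W l r, IsEdgeCell Q v η ε i W l r := by
  have hγ := h.pos
  obtain ⟨W, hW, hm⟩ := (ConvexQuadrangulation.mem_convexHull_iff_exists_cell (Q := Q)).1
    ((convex_convexHull ℝ _).midpoint_mem (h.vertex_mem_convexHull i)
      (h.vertex_mem_convexHull (i + 1)))
  obtain ⟨⟨l, hl, hl0, hls⟩, r, hr, hr0, hrs⟩ := h.exists_edgeSide_nonpos_nonneg hW hm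
  obtain ⟨hld, hlv⟩ := (h.dist_le_of_mem_cells hend hW hl hl0).resolve_right fun hd => by
    linarith [h.le_edgeSide_of_dist_le hd.1]
  obtain ⟨hrd, hrv⟩ := (h.dist_le_of_mem_cells hend hW hr hr0).resolve_left fun hd => by
    linarith [h.edgeSide_le_of_dist_le hd.1]
  have hls := h.edgeSide_le_of_dist_le hld
  have hrs := h.le_edgeSide_of_dist_le hrd
  have hlr : l ≠ r := by rintro rfl; linarith
  have hle : ∀ c ∈ W, edgeHeight v i c ≤ η := fun c hc => by
    by_contra! hlt
    exact ConvexQuadrangulation.notMem_interior hW (h.dent_mem i) (h.dent_mem_interior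
      (convex_convexHull ℝ _) (ConvexQuadrangulation.convexHull_subset hW)
      (subset_convexHull ℝ _ hl) (subset_convexHull ℝ _ hr) (subset_convexHull ℝ _ hc)
      hl0 hr0 hls hrs hlt)
  refine ⟨W, l, r, hW, hl, hr, hl0, hr0, hlv, hrv, hle, fun c hc => ?_⟩
  by_cases hcl : c = l
  · exact .inl hcl
  by_cases hcr : c = r
  · exact .inr (.inl hcr)
  have hne := h.edgeHeight_ne_zero_of_mem_cells hW hl hr hc hlr hcl hcr hl0 hr0
  have hpos := (h.edgeHeight_nonneg (ConvexQuadrangulation.convexHull_subset hW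
    (subset_convexHull ℝ _ hc)) i).lt_of_ne' hne
  rcases ConvexQuadrangulation.mem_or_mem_steinerPoints hW hc with hcP | hcS
  · rcases h.eq_of_edgeHeight_le hcP (hle c hc) with rfl | rfl | rfl
    · exact absurd (edgeHeight_left v i) hne
    · exact absurd (edgeHeight_right v i) hne
    · exact .inr (.inr (.inl rfl))
  · exact .inr (.inr (.inr ⟨hcS, hpos⟩))

theorem exists_triangle_of_not_serves (h : DentedPolygon k P v γ ρ η ε)
    (hi : ∀ z ∈ steinerPoints P Q, ¬ Serves v ρ η i z) :
    ∃ W ∈ Q.cells, W.card = 3 ∧ dent ε v i ∈ W ∧ ∀ c ∈ W, edgeHeight v i c ≤ η := by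
  obtain ⟨W, l, r, hW⟩ := h.exists_isEdgeCell (Q := Q) (i := i) fun z hz hz0 => by
    by_contra! hd
    exact hi z hz ⟨hz0.trans_le h.eta_pos.le, fun _ => hd⟩
  have hsub : W ⊆ {l, r, dent ε v i} := fun c hc => by
    rcases hW.eq_or_mem c hc with hc | hc | hc | ⟨hcS, hpos⟩
    · simp [hc]
    · simp [hc]
    · simp [hc]
    · exact absurd ⟨hW.edgeHeight_le _ ‹_›, fun h0 => absurd h0 hpos.ne'⟩ (hi c hcS)
  have hle : ({l, r, dent ε v i} : Finset Pt).card ≤ 3 := Finset.card_le_three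
  have hcard : W.card = 3 := by
    have := Finset.card_le_card hsub
    rcases ConvexQuadrangulation.card_eq_three_or_four hW.mem_cells with h3 | h4 <;> omega
  refine ⟨W, hW.mem_cells, hcard, ?_, hW.edgeHeight_le⟩
  rw [Finset.eq_of_subset_of_card_le hsub (hle.trans hcard.ge)]
  simp

theorem exists_serves_or_exists_serves (h : DentedPolygon k P v γ ρ η ε)
    (Q : ConvexQuadrangulation P) (hij : i < j) (hji : j < i + k) :
    (∃ z ∈ steinerPoints P Q, Serves v ρ η i z) ∨ ∃ z ∈ steinerPoints P Q, Serves v ρ η j z := by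
  by_contra! hcon
  obtain ⟨W, hW, hcard, -, hle⟩ := h.exists_triangle_of_not_serves hcon.1
  obtain ⟨W', hW', hcard', hmem, -⟩ := h.exists_triangle_of_not_serves hcon.2
  rw [← ConvexQuadrangulation.eq_of_card_eq_three hW hW' hcard hcard'] at hmem
  linarith [hle _ hmem, h.half_le_edgeHeight_dent hij hji, h.eta_lt, h.pos]

theorem adjacent_of_serves (h : DentedPolygon k P v γ ρ η ε) (hz : z ∈ steinerPoints P Q)
    (hij : i < j) (hji : j < i + k) (hi : Serves v ρ η i z) (hj : Serves v ρ η j z) :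
    j = i + 1 ∨ j + 1 = i + k :=
  h.adjacent_of_edgeHeight_le hij hji
    (ConvexQuadrangulation.mem_convexHull_of_mem_steinerPoints hz) hi.1 hj.1

open Classical in
theorem card_filter_serves_le_two (h : DentedPolygon k P v γ ρ η ε) (hz : z ∈ steinerPoints P Q) :
    ((Finset.range k).filter (Serves v ρ η · z)).card ≤ 2 := by
  have hk := h.four_le
  by_contra! hlt
  obtain ⟨a, b, c, ha, hb, hc, hab, hac, hbc⟩ := Finset.two_lt_card_iff.1 hlt
  have hadj : ∀ i j, i ∈ (Finset.range k).filter (Serves v ρ η · z) →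
      j ∈ (Finset.range k).filter (Serves v ρ η · z) → i < j → j = i + 1 ∨ j + 1 = i + k := by
    intro i j hi hj hij
    rw [Finset.mem_filter, Finset.mem_range] at hi hj
    exact h.adjacent_of_serves hz hij (by omega) hi.2 hj.2
  have ha' := Finset.mem_range.1 (Finset.mem_filter.1 ha).1
  have hb' := Finset.mem_range.1 (Finset.mem_filter.1 hb).1
  have hc' := Finset.mem_range.1 (Finset.mem_filter.1 hc).1
  have h₁ := hadj a b ha hb
  have h₂ := hadj b a hb ha
  have h₃ := hadj a c ha hc
  have h₄ := hadj c a hc ha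
  have h₅ := hadj b c hb hc
  have h₆ := hadj c b hc hb
  omega

end DentedPolygon

end Serves

/-! ### Tight quadrangulations -/

theorem existsUnique_and_card_eq_of_card_mul_le {α β : Type*} {r : α → β → Prop}
    [∀ a b, Decidable (r a b)] {s : Finset α} {t : Finset β} {n : ℕ}
    (hs : ∀ a ∈ s, ∃ b ∈ t, r a b) (ht : ∀ b ∈ t, (s.bipartiteBelow r b).card ≤ n)
    (h : t.card * n ≤ s.card) :
    (∀ a ∈ s, ∃! b, b ∈ t ∧ r a b) ∧ ∀ b ∈ t, (s.bipartiteBelow r b).card = n := by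
  have hs' : ∀ a ∈ s, 1 ≤ (t.bipartiteAbove r a).card := fun a ha => by
    obtain ⟨b, hb, hab⟩ := hs a ha
    exact Finset.card_pos.2 ⟨b, Finset.mem_filter.2 ⟨hb, hab⟩⟩
  have hsum := Finset.sum_card_bipartiteAbove_eq_sum_card_bipartiteBelow r (s := s) (t := t)
  have hle := Finset.sum_le_sum hs'
  have hge := Finset.sum_le_sum ht
  have hone : ∑ _a ∈ s, 1 = s.card := (Finset.card_eq_sum_ones s).symm
  have hn : ∑ _b ∈ t, n = t.card * n := Finset.sum_const_nat fun _ _ => rfl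
  refine ⟨fun a ha => ?_, (Finset.sum_eq_sum_iff_of_le ht).1 (by omega)⟩
  obtain ⟨b, hb⟩ := Finset.card_eq_one.1
    ((Finset.sum_eq_sum_iff_of_le hs').1 (by omega) a ha).symm
  have hmem (c : β) : c ∈ t ∧ r a c ↔ c = b := by
    rw [← Finset.mem_singleton, ← hb, Finset.mem_bipartiteAbove]
  exact ⟨b, (hmem b).2 rfl, fun c hc => (hmem c).1 hc⟩

/-- The extremal way of serving the edges: the edge from `v 0` to `v 1` is not served, all other
edges are served once, and every Steiner point serves the two edges at one of the vertices. -/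
structure IsTight {P : Finset Pt} (Q : ConvexQuadrangulation P) (k : ℕ) (v : ℕ → Pt) (ρ η : ℝ) :
    Prop where
  not_serves_zero : ∀ z ∈ steinerPoints P Q, ¬ Serves v ρ η 0 z
  existsUnique_serves : ∀ i, 1 ≤ i → i < k → ∃! z, z ∈ steinerPoints P Q ∧ Serves v ρ η i z
  exists_serves_serves : ∀ z ∈ steinerPoints P Q,
    ∃ m, 1 ≤ m ∧ m + 1 < k ∧ Serves v ρ η m z ∧ Serves v ρ η (m + 1) z

section IsTight

variable {k : ℕ} {P : Finset Pt} {v : ℕ → Pt} {γ ρ η ε : ℝ} {i j : ℕ} {z : Pt}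
  {Q : ConvexQuadrangulation P} {W : Finset Pt}

open Classical in
theorem DentedPolygon.isTight (h : DentedPolygon k P v γ ρ η ε)
    (h0 : ∀ z ∈ steinerPoints P Q, ¬ Serves v ρ η 0 z) (hcard : 2 * (steinerPoints P Q).card < k) :
    IsTight Q k v ρ η := by
  have hserved : ∀ i ∈ Finset.Ico 1 k, ∃ z ∈ steinerPoints P Q, Serves v ρ η i z := fun i hi => by
    rw [Finset.mem_Ico] at hi
    exact (h.exists_serves_or_exists_serves Q (i := 0) (j := i) (by omega) (by omega)).resolve_left
      fun ⟨z, hz, hz0⟩ => h0 z hz hz0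
  have hle : ∀ z ∈ steinerPoints P Q,
      ((Finset.Ico 1 k).bipartiteBelow (Serves v ρ η) z).card ≤ 2 := fun z hz =>
    (Finset.card_le_card (Finset.filter_subset_filter _ fun i hi => by
      rw [Finset.mem_Ico] at hi; exact Finset.mem_range.2 hi.2)).trans
      (h.card_filter_serves_le_two hz)
  obtain ⟨hunique, htwo⟩ := existsUnique_and_card_eq_of_card_mul_le hserved hle
    (by rw [Nat.card_Ico]; omega)
  refine ⟨h0, fun i h1 hi => hunique i (Finset.mem_Ico.2 ⟨h1, hi⟩), fun z hz => ?_⟩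
  obtain ⟨a, b, ha, hb, hab⟩ :
      ∃ a b, (1 ≤ a ∧ Serves v ρ η a z) ∧ (b < k ∧ Serves v ρ η b z) ∧ a < b := by
    obtain ⟨a, ha, b, hb, hab⟩ := Finset.one_lt_card.1 (Nat.lt_of_succ_le (htwo z hz).ge)
    simp only [Finset.mem_bipartiteBelow, Finset.mem_Ico] at ha hb
    rcases lt_or_gt_of_ne hab with hab | hab
    exacts [⟨a, b, ⟨ha.1.1, ha.2⟩, ⟨hb.1.2, hb.2⟩, hab⟩,
      ⟨b, a, ⟨hb.1.1, hb.2⟩, ⟨ha.1.2, ha.2⟩, hab⟩]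
  obtain rfl : b = a + 1 :=
    (h.adjacent_of_serves hz hab (by omega) ha.2 hb.2).resolve_right (by omega)
  exact ⟨a, ha.1, hb.1, ha.2, hb.2⟩

namespace IsTight

theorem serves_unique (hQ : IsTight Q k v ρ η) (h1 : 1 ≤ i) (hi : i < k) {w : Pt}
    (hz : z ∈ steinerPoints P Q) (hw : w ∈ steinerPoints P Q) (hzi : Serves v ρ η i z)
    (hwi : Serves v ρ η i w) : z = w :=
  (hQ.existsUnique_serves i h1 hi).unique ⟨hz, hzi⟩ ⟨hw, hwi⟩

theorem exists_eq_or_eq_succ (hQ : IsTight Q k v ρ η) (h : DentedPolygon k P v γ ρ η ε)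
    (hz : z ∈ steinerPoints P Q) (hi : i < k) (hzi : edgeHeight v i z ≤ η) :
    ∃ m, 1 ≤ m ∧ m + 1 < k ∧ Serves v ρ η m z ∧ Serves v ρ η (m + 1) z ∧ (i = m ∨ i = m + 1) := by
  have hk := h.four_le
  obtain ⟨m, h1, hm, hzm, hzm'⟩ := hQ.exists_serves_serves z hz
  refine ⟨m, h1, hm, hzm, hzm', ?_⟩
  have hzP := ConvexQuadrangulation.mem_convexHull_of_mem_steinerPoints hz
  by_contra! hne
  rcases lt_or_gt_of_ne hne.1 with hlt | hgt
  · have := h.adjacent_of_edgeHeight_le hlt (by omega) hzP hzi hzm.1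
    have := h.adjacent_of_edgeHeight_le (show i < m + 1 by omega) (by omega) hzP hzi hzm'.1
    omega
  · have := h.adjacent_of_edgeHeight_le hgt (by omega) hzP hzm.1 hzi
    have := h.adjacent_of_edgeHeight_le (show m + 1 < i by omega) (by omega) hzP hzm'.1 hzi
    omega

theorem edgeHeight_pos (hQ : IsTight Q k v ρ η) (h : DentedPolygon k P v γ ρ η ε)
    (hz : z ∈ steinerPoints P Q) (hi : i < k) : 0 < edgeHeight v i z := by
  have hzP := ConvexQuadrangulation.mem_convexHull_of_mem_steinerPoints hz
  refine (h.edgeHeight_nonneg hzP i).lt_of_ne' fun hz0 => ?_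
  obtain ⟨m, -, -, hzm, hzm', rfl | rfl⟩ :=
    hQ.exists_eq_or_eq_succ h hz hi (hz0.trans_le h.eta_pos.le)
  · exact (hzm.2 hz0).2.not_ge (h.dist_vertex_le hzP hzm.1 hzm'.1)
  · exact (hzm'.2 hz0).1.not_ge (h.dist_vertex_le hzP hzm.1 hzm'.1)

theorem exists_edge_cell (hQ : IsTight Q k v ρ η) (h : DentedPolygon k P v γ ρ η ε) (hi : i < k) :
    ∃ W ∈ Q.cells, v i ∈ W ∧ v (i + 1) ∈ W ∧ (∀ c ∈ W, edgeHeight v i c ≤ η) ∧ ∀ c ∈ W,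
      c = v i ∨ c = v (i + 1) ∨ c = dent ε v i ∨ (c ∈ steinerPoints P Q ∧ Serves v ρ η i c) := by
  obtain ⟨W, l, r, hW⟩ := h.exists_isEdgeCell (Q := Q) (i := i) fun z hz hz0 =>
    absurd hz0 (hQ.edgeHeight_pos h hz hi).ne'
  obtain rfl := hW.left_eq_or_mem.resolve_right fun hl =>
    (hQ.edgeHeight_pos h hl hi).ne' hW.edgeHeight_left
  obtain rfl := hW.right_eq_or_mem.resolve_right fun hr =>
    (hQ.edgeHeight_pos h hr hi).ne' hW.edgeHeight_right
  exact ⟨W, hW.mem_cells, hW.left_mem, hW.right_mem, hW.edgeHeight_le, fun c hc =>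
    (hW.eq_or_mem c hc).imp_right <| Or.imp_right <| Or.imp_right fun ⟨hcS, hpos⟩ =>
      ⟨hcS, hW.edgeHeight_le c hc, fun h0 => absurd h0 hpos.ne'⟩⟩

theorem triangle_mem_cells (hQ : IsTight Q k v ρ η) (h : DentedPolygon k P v γ ρ η ε) :
    {v 0, v 1, dent ε v 0} ∈ Q.cells := by
  obtain ⟨W, hW, -, -, -, hall⟩ := hQ.exists_edge_cell h (i := 0) (by linarith [h.four_le])
  have hsub : W ⊆ {v 0, v 1, dent ε v 0} := fun c hc => by
    rcases hall c hc with hc | hc | hc | ⟨hcS, hserves⟩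
    · simp [hc]
    · simp [hc]
    · simp [hc]
    · exact absurd hserves (hQ.not_serves_zero c hcS)
  have hcard : 3 ≤ W.card := by
    rcases ConvexQuadrangulation.card_eq_three_or_four hW with h3 | h4 <;> omega
  rwa [← Finset.eq_of_subset_of_card_le hsub (Finset.card_le_three.trans hcard)]

theorem exists_quadrilateral (hQ : IsTight Q k v ρ η) (h : DentedPolygon k P v γ ρ η ε)
    (h1 : 1 ≤ i) (hi : i < k) :
    ∃ z ∈ steinerPoints P Q,
      Serves v ρ η i z ∧ quadVerts (v i, v (i + 1), dent ε v i, z) ∈ Q.cells := by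
  obtain ⟨z, ⟨hz, hzi⟩, hunique⟩ := hQ.existsUnique_serves i h1 hi
  obtain ⟨W, hW, -, -, hle, hall⟩ := hQ.exists_edge_cell h hi
  have hsub : W ⊆ quadVerts (v i, v (i + 1), dent ε v i, z) := fun c hc => by
    simp only [quadVerts, Finset.mem_insert, Finset.mem_singleton]
    exact (hall c hc).imp_right (Or.imp_right (Or.imp_right (hunique c)))
  have hW4 : W.card = 4 := by
    refine (ConvexQuadrangulation.card_eq_three_or_four hW).resolve_left fun hW3 => ?_
    obtain ⟨W', hW', hW'3, hmem, -⟩ := h.exists_triangle_of_not_serves hQ.not_serves_zero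
    rw [← ConvexQuadrangulation.eq_of_card_eq_three hW hW' hW3 hW'3] at hmem
    have hfar := h.half_le_edgeHeight_dent hi (show k < i + k by omega)
    rw [h.periodic_dent.eq] at hfar
    linarith [hle _ hmem, h.eta_lt, h.pos]
  obtain rfl := Finset.eq_of_subset_of_card_le hsub (Finset.card_le_four.trans hW4.ge)
  exact ⟨z, hz, hzi, hW⟩

end IsTight

end IsTight

/-! ### Peeling off the cells along the edges -/

section DentCell

variable {a b c d : Pt} {s : Set Pt}

theorem strictConvexQuad_of_orient_midpoint_pos (hs : ConvexIndependent ℝ (Subtype.val : s → Pt))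
    (ha : a ∈ s) (hb : b ∈ s) (hc : c ∈ s) (hd : d ∈ s) (habc : 0 < orient a b c)
    (habd : 0 < orient a b d) (hmid : 0 < orient c d (midpoint ℝ a b)) :
    StrictConvexQuad a b c d := by
  obtain ⟨-, hac, hbc⟩ := ne_of_orient_ne_zero habc.ne'
  obtain ⟨-, had, hbd⟩ := ne_of_orient_ne_zero habd.ne'
  obtain ⟨hcd, -, -⟩ := ne_of_orient_ne_zero hmid.ne'
  rw [orient_midpoint, ← orient_rotate_right c d b] at hmid
  have hc' := exists_orient_neg_of_convexIndependent hs ha hb hd hc hac hbc hcd.symm habd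
  have hd' := exists_orient_neg_of_convexIndependent hs ha hb hc hd had hbd hcd habc
  rw [orient_swap_right b c d, orient_rotate_left c d a] at hc'
  rw [orient_swap_left a c d, ← orient_rotate_left a c d] at hd'
  rw [strictConvexQuad_iff_orient_pos, orient_rotate_right a b d]
  refine ⟨habc, ?_, ?_, habd⟩
  · by_contra! hneg
    rcases hc' with h | h | h <;> linarith
  · by_contra! hneg
    rcases hd' with h | h | h <;> linarith

theorem StrictConvexQuad.isDentCell (h : StrictConvexQuad a b c d) :
    IsDentCell (quadVerts (a, b, c, d)) a d c := by
  have hda := h.rotate.rotate.rotate.isLeftEdge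
  have hcd := h.rotate.rotate.isLeftEdge
  simp only [quadVerts_rotate] at hda hcd
  rw [strictConvexQuad_iff_orient_pos] at h
  refine ⟨hda.right_mem, hda.left_mem, hcd.left_mem, ?_, hda.orient_nonneg, hcd.orient_nonneg, b,
    by simp [quadVerts], ?_⟩
  · rw [orient_swap_right, ← orient_rotate_left]; linarith [h.2.2.1]
  · rw [orient_rotate_right]; exact h.1

end DentCell

/-- The vertices of the polygon that remains after removing the cells along the edges from a tight
quadrangulation: `v (j + 1)` is replaced by the Steiner point serving the edges at it, if any. -/
noncomputable def movedVertex {P : Finset Pt} (Q : ConvexQuadrangulation P) (v : ℕ → Pt) (ρ η : ℝ)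
    (j : ℕ) : Pt :=
  open Classical in
  if h : ∃ z ∈ steinerPoints P Q, Serves v ρ η j z ∧ Serves v ρ η (j + 1) z then h.choose
  else v (j + 1)

/-- The sequence `p 0, y 0, p 1, y 1, …`. -/
def interleave (p y : ℕ → Pt) (t : ℕ) : Pt := if t % 2 = 0 then p (t / 2) else y (t / 2)

@[simp] theorem interleave_two_mul (p y : ℕ → Pt) (j : ℕ) : interleave p y (2 * j) = p j := by
  rw [interleave, if_pos (by omega), Nat.mul_div_cancel_left _ two_pos]

@[simp] theorem interleave_two_mul_add_one (p y : ℕ → Pt) (j : ℕ) :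
    interleave p y (2 * j + 1) = y j := by
  rw [interleave, if_neg (by omega), show (2 * j + 1) / 2 = j by omega]

section Peeling

variable {k : ℕ} {P : Finset Pt} {v y : ℕ → Pt} {γ ρ η ε : ℝ} {i j : ℕ} {z : Pt}
  {Q : ConvexQuadrangulation P} {W : Finset Pt}

theorem orient_dent_midpoint (ε : ℝ) (v : ℕ → Pt) (i : ℕ) (z : Pt) :
    orient z (dent ε v i) (midpoint ℝ (v i) (v (i + 1))) = ε * edgeSide v i z := by
  simp only [dent, edgeSide, orient_eq, det2, Prod.smul_fst, Prod.smul_snd, smul_eq_mul]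
  ring

namespace DentedPolygon

theorem dist_interleave_le (h : DentedPolygon k P v γ ρ η ε)
    (hy : ∀ j < k, dist (y j) (v (j + 1)) ≤ ρ) {t : ℕ} (ht : t < 2 * k) :
    dist (interleave (dent ε v) y t) (idealCycle v t) ≤ ρ := by
  obtain ⟨j, rfl | rfl⟩ := t.even_or_odd'
  · rw [interleave_two_mul, idealCycle, show (2 * j + 1) / 2 = j by omega,
      show (2 * j + 2) / 2 = j + 1 by omega]
    exact h.dist_dent_midpoint_le j
  · rw [interleave_two_mul_add_one, idealCycle, show (2 * j + 1 + 1) / 2 = j + 1 by omega,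
      show (2 * j + 1 + 2) / 2 = j + 1 by omega, midpoint_self]
    exact hy j (by omega)

theorem alternatingPolygon (h : DentedPolygon k P v γ ρ η ε)
    (hy : ∀ j < k, dist (y j) (v (j + 1)) ≤ ρ) (hfirst : y 0 = v 1) (hlast : y (k - 1) = v 0)
    (hneg : ∀ j, j + 1 < k → orient (y j) (dent ε v (j + 1)) (y (j + 1)) < 0) :
    AlternatingPolygon (2 * k) (interleave (dent ε v) y) where
  four_le := by linarith [h.four_le]
  orient_pos := h.orient_pos_of_dist_le 0 _ fun t ht => by
    simpa only [zero_add] using h.dist_interleave_le hy ht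
  orient_neg {a b c} hab hbc hc habc := by
    have hk := h.four_le
    rcases habc with ⟨ha, rfl, rfl⟩ | ⟨rfl, rfl, hc⟩
    · obtain ⟨j, rfl⟩ : ∃ j, a = 2 * j + 1 := ⟨a / 2, by omega⟩
      rw [show 2 * j + 1 + 1 = 2 * (j + 1) by ring, show 2 * j + 1 + 2 = 2 * (j + 1) + 1 by ring]
      simpa only [interleave_two_mul, interleave_two_mul_add_one] using hneg j (by omega)
    · rw [show c = 2 * (k - 1) + 1 by omega, show 0 = 2 * 0 by rfl, show 1 = 2 * 0 + 1 by rfl]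
      simp only [interleave_two_mul, interleave_two_mul_add_one]
      rw [hfirst, hlast, orient_reverse, neg_lt_zero]
      exact h.edgeHeight_dent_pos 0

theorem alternatingPolygon_vertices (h : DentedPolygon k P v γ ρ η ε) :
    AlternatingPolygon (2 * k) (interleave (dent ε v) fun j => v (j + 1)) := by
  have hk := h.four_le
  refine h.alternatingPolygon (fun j _ => (dist_self _).trans_le h.rho_pos.le) rfl ?_ fun j _ => ?_
  · rw [Nat.sub_add_cancel (by omega), h.periodic.eq]
  · rw [orient_swap_right, neg_lt_zero]
    exact h.edgeHeight_dent_pos (j + 1)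

theorem exists_lt_and_eq (h : DentedPolygon k P v γ ρ η ε) (hz : z ∈ P) :
    ∃ j < k, z = v (j + 1) ∨ z = dent ε v j := by
  obtain ⟨j, ⟨-, hj⟩, rfl | rfl⟩ := h.exists_index hz 0
  · rcases j with _ | j
    · refine ⟨k - 1, by omega, .inl ?_⟩
      rw [Nat.sub_add_cancel (by omega), h.periodic.eq]
    · exact ⟨j, by omega, .inl rfl⟩
  · exact ⟨j, by omega, .inr rfl⟩

theorem coe_eq_image (h : DentedPolygon k P v γ ρ η ε) :
    (P : Set Pt) = interleave (dent ε v) (fun j => v (j + 1)) '' Set.Iio (2 * k) := by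
  ext z
  constructor
  · intro hz
    obtain ⟨j, hj, rfl | rfl⟩ := h.exists_lt_and_eq hz
    · exact ⟨2 * j + 1, by rw [Set.mem_Iio]; omega, interleave_two_mul_add_one _ _ j⟩
    · exact ⟨2 * j, by rw [Set.mem_Iio]; omega, interleave_two_mul _ _ j⟩
  · rintro ⟨t, -, rfl⟩
    obtain ⟨j, rfl | rfl⟩ := t.even_or_odd'
    · rw [interleave_two_mul]; exact h.dent_mem j
    · rw [interleave_two_mul_add_one]; exact h.vertex_mem (j + 1)

theorem generalPosition (h : DentedPolygon k P v γ ρ η ε) : GeneralPosition (P : Set Pt) := by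
  rw [h.coe_eq_image]; exact h.alternatingPolygon_vertices.generalPosition

theorem card_eq (h : DentedPolygon k P v γ ρ η ε) : P.card = 2 * k := by
  rw [← Set.ncard_coe_finset, h.coe_eq_image, h.alternatingPolygon_vertices.injOn.ncard_image]
  simp

end DentedPolygon

theorem movedVertex_eq_or_mem (Q : ConvexQuadrangulation P) (v : ℕ → Pt) (ρ η : ℝ) (j : ℕ) :
    movedVertex Q v ρ η j = v (j + 1) ∨ movedVertex Q v ρ η j ∈ steinerPoints P Q ∧
      Serves v ρ η j (movedVertex Q v ρ η j) ∧ Serves v ρ η (j + 1) (movedVertex Q v ρ η j) := by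
  unfold movedVertex
  split_ifs with h
  exacts [.inr h.choose_spec, .inl rfl]

namespace DentedPolygon

theorem movedVertex_mem_convexHull (h : DentedPolygon k P v γ ρ η ε) (Q : ConvexQuadrangulation P)
    (j : ℕ) : movedVertex Q v ρ η j ∈ convexHull ℝ (P : Set Pt) := by
  rcases movedVertex_eq_or_mem Q v ρ η j with hy | ⟨hS, -⟩
  · rw [hy]; exact h.vertex_mem_convexHull _
  · exact ConvexQuadrangulation.mem_convexHull_of_mem_steinerPoints hS

theorem dist_movedVertex_le (h : DentedPolygon k P v γ ρ η ε) (Q : ConvexQuadrangulation P)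
    (j : ℕ) : dist (movedVertex Q v ρ η j) (v (j + 1)) ≤ ρ := by
  rcases movedVertex_eq_or_mem Q v ρ η j with hy | ⟨-, hj, hj'⟩
  · rw [hy, dist_self]; exact h.rho_pos.le
  · exact h.dist_vertex_le (h.movedVertex_mem_convexHull Q j) hj.1 hj'.1

end DentedPolygon

namespace IsTight

theorem movedVertex_zero (hQ : IsTight Q k v ρ η) : movedVertex Q v ρ η 0 = v 1 :=
  (movedVertex_eq_or_mem Q v ρ η 0).resolve_right fun ⟨hS, hserves, _⟩ =>
    hQ.not_serves_zero _ hS hserves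

theorem movedVertex_last (hQ : IsTight Q k v ρ η) (h : DentedPolygon k P v γ ρ η ε) :
    movedVertex Q v ρ η (k - 1) = v 0 := by
  have hy := movedVertex_eq_or_mem Q v ρ η (k - 1)
  rw [Nat.sub_add_cancel (by linarith [h.four_le]), h.periodic.eq] at hy
  refine hy.resolve_right fun ⟨hS, _, hserves⟩ => hQ.not_serves_zero _ hS ?_
  have hsucc : v (k + 1) = v (0 + 1) := by rw [add_comm k, h.periodic]
  simpa only [Serves, edgeHeight, h.periodic.eq, hsucc] using hserves

theorem movedVertex_eq (hQ : IsTight Q k v ρ η) (hj : j + 1 < k) (hz : z ∈ steinerPoints P Q)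
    (hzj : Serves v ρ η j z) (hzj' : Serves v ρ η (j + 1) z) : movedVertex Q v ρ η j = z := by
  have hex : ∃ z ∈ steinerPoints P Q, Serves v ρ η j z ∧ Serves v ρ η (j + 1) z :=
    ⟨z, hz, hzj, hzj'⟩
  rw [movedVertex, dif_pos hex]
  exact hQ.serves_unique (by omega) hj hex.choose_spec.1 hz hex.choose_spec.2.2 hzj'

theorem movedVertex_eq_vertex (hQ : IsTight Q k v ρ η) (h1 : 1 ≤ i) (hik : i < k)
    (hij : i = j ∨ i = j + 1) (hz : z ∈ steinerPoints P Q) (hzi : Serves v ρ η i z)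
    (hzj : ¬ (Serves v ρ η j z ∧ Serves v ρ η (j + 1) z)) : movedVertex Q v ρ η j = v (j + 1) := by
  refine (movedVertex_eq_or_mem Q v ρ η j).resolve_right fun ⟨hS, hj, hj'⟩ => hzj ?_
  have hyi : Serves v ρ η i (movedVertex Q v ρ η j) := by rcases hij with rfl | rfl <;> assumption
  rw [hQ.serves_unique h1 hik hz hS hzi hyi]
  exact ⟨hj, hj'⟩

end IsTight

namespace DentedPolygon

theorem not_serves_add_two (h : DentedPolygon k P v γ ρ η ε) (hz : z ∈ steinerPoints P Q)
    (hzi : Serves v ρ η i z) : ¬ Serves v ρ η (i + 2) z := fun hzi' => by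
  have := h.adjacent_of_serves hz (by omega) (by linarith [h.four_le]) hzi hzi'
  have := h.four_le
  omega

theorem isDentCell_of_dist_right_le (h : DentedPolygon k P v γ ρ η ε)
    (hW : quadVerts (v i, v (i + 1), dent ε v i, z) ∈ Q.cells) (hz : 0 < edgeHeight v i z)
    (hdist : dist z (v (i + 1)) ≤ ρ) :
    IsDentCell (quadVerts (v i, v (i + 1), dent ε v i, z)) (v i) (dent ε v i) z := by
  have hW' : quadVerts (v i, v (i + 1), dent ε v i, z) =
      quadVerts (v i, v (i + 1), z, dent ε v i) := by
    simp only [quadVerts, Finset.pair_comm]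
  have hs := ConvexQuadrangulation.convexIndependent_of_mem_cells hW
  rw [hW'] at hs ⊢
  refine (strictConvexQuad_of_orient_midpoint_pos hs ?_ ?_ ?_ ?_ hz (h.edgeHeight_dent_pos i)
    ?_).isDentCell
  iterate 4 simp [quadVerts]
  rw [orient_dent_midpoint]
  exact mul_pos h.eps_pos (by linarith [h.le_edgeSide_of_dist_le hdist, h.pos])

theorem isDentCell_of_dist_left_le (h : DentedPolygon k P v γ ρ η ε)
    (hW : quadVerts (v i, v (i + 1), dent ε v i, z) ∈ Q.cells) (hz : 0 < edgeHeight v i z)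
    (hdist : dist z (v i) ≤ ρ) :
    IsDentCell (quadVerts (v i, v (i + 1), dent ε v i, z)) z (dent ε v i) (v (i + 1)) := by
  have hs := ConvexQuadrangulation.convexIndependent_of_mem_cells hW
  rw [quadVerts_rotate z]
  refine (strictConvexQuad_of_orient_midpoint_pos hs ?_ ?_ ?_ ?_ (h.edgeHeight_dent_pos i) hz
    ?_).rotate.rotate.rotate.isDentCell
  iterate 4 simp [quadVerts]
  rw [orient_swap_left, orient_dent_midpoint, neg_pos]
  exact mul_neg_of_pos_of_neg h.eps_pos (by linarith [h.edgeSide_le_of_dist_le hdist, h.pos])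

end DentedPolygon

namespace IsTight

theorem exists_isDentCell (hQ : IsTight Q k v ρ η) (h : DentedPolygon k P v γ ρ η ε)
    (hj : j + 1 < k) :
    ∃ W ∈ Q.cells, v (j + 1) ∈ W ∧ v (j + 2) ∈ W ∧
      IsDentCell W (movedVertex Q v ρ η j) (dent ε v (j + 1)) (movedVertex Q v ρ η (j + 1)) := by
  obtain ⟨z, hz, hzj, hW⟩ := hQ.exists_quadrilateral h (i := j + 1) (by omega) hj
  refine ⟨_, hW, by simp [quadVerts], by simp [quadVerts], ?_⟩
  have hpos := hQ.edgeHeight_pos h hz hj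
  have hzP := ConvexQuadrangulation.mem_convexHull_of_mem_steinerPoints hz
  obtain ⟨m, -, hm, hzm, hzm', rfl | hmj⟩ := hQ.exists_eq_or_eq_succ h hz hj hzj.1
  · have hleft : movedVertex Q v ρ η j = v (j + 1) :=
      hQ.movedVertex_eq_vertex (by omega) hj (.inr rfl) hz hzj
        fun hserves => h.not_serves_add_two hz hserves.1 hzm'
    rw [hleft, hQ.movedVertex_eq hm hz hzm hzm']
    exact h.isDentCell_of_dist_right_le hW hpos (h.dist_vertex_le hzP hzm.1 hzm'.1)
  · obtain rfl : j = m := by omega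
    have hright : movedVertex Q v ρ η (j + 1) = v (j + 2) :=
      hQ.movedVertex_eq_vertex (by omega) hj (.inl rfl) hz hzj
        fun hserves => h.not_serves_add_two hz hzm hserves.2
    rw [hright, hQ.movedVertex_eq hm hz hzm hzm']
    exact h.isDentCell_of_dist_left_le hW hpos (h.dist_vertex_le hzP hzm.1 hzm'.1)

section DentCells

variable {F : ℕ → Finset Pt}

/-- If a Steiner point `s` has replaced `v (j + 1)`, then the two dent cells at the edge from
`v (j + 1)` to `s` cover all of the convex hull near `v (j + 1)`. -/
theorem movedVertex_eq_of_mem (hQ : IsTight Q k v ρ η) (h : DentedPolygon k P v γ ρ η ε)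
    (hF : ∀ j, j + 1 < k → F j ∈ Q.cells ∧ v (j + 1) ∈ F j ∧ v (j + 2) ∈ F j ∧
      movedVertex Q v ρ η j ∈ F j ∧ movedVertex Q v ρ η (j + 1) ∈ F j)
    (hW : W ∈ Q.cells) (hWF : ∀ j, j + 1 < k → W ≠ F j) (hj : j < k) (hvW : v (j + 1) ∈ W) :
    movedVertex Q v ρ η j = v (j + 1) := by
  by_contra hne
  obtain ⟨hs, -, -⟩ := (movedVertex_eq_or_mem Q v ρ η j).resolve_left hne
  obtain ⟨i, rfl⟩ : ∃ i, j = i + 1 := Nat.exists_eq_succ_of_ne_zero fun hj0 => hne (by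
    rw [hj0]; exact hQ.movedVertex_zero)
  have hik : i + 1 + 1 < k := lt_of_le_of_ne hj fun hik => hne (by
    have hlast := hQ.movedVertex_last h
    rwa [show k - 1 = i + 1 by omega, ← h.periodic.eq, ← hik] at hlast)
  obtain ⟨hbefore, -, hv, -, hsb⟩ := hF i hj
  obtain ⟨hafter, hv', hnext, hsa, -⟩ := hF (i + 1) hik
  obtain ⟨y, hy⟩ := ConvexQuadrangulation.nonempty_interior hW
  have hyP := ConvexQuadrangulation.convexHull_subset hW (interior_subset hy)
  rcases le_total 0 (orient (movedVertex Q v ρ η (i + 1)) (v (i + 1 + 1)) y) with hside | hside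
  · exact hWF (i + 1) hik (ConvexQuadrangulation.eq_of_mem_sector hW hafter hvW hy hv' hnext hsa
      (hQ.edgeHeight_pos h hs hik) (h.edgeHeight_nonneg hyP _) hside)
  · refine hWF i hj (ConvexQuadrangulation.eq_of_mem_sector hW hbefore hvW hy hv hsb
      (hF i hj).2.1 ?_ ?_ (h.edgeHeight_nonneg hyP (i + 1)))
    · rw [orient_rotate_left]
      exact hQ.edgeHeight_pos h hs hj
    · rwa [orient_swap_left, neg_nonneg]

theorem exists_eq_interleave_of_mem (hQ : IsTight Q k v ρ η) (h : DentedPolygon k P v γ ρ η ε)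
    (hF : ∀ j, j + 1 < k → F j ∈ Q.cells ∧ v (j + 1) ∈ F j ∧ v (j + 2) ∈ F j ∧
      movedVertex Q v ρ η j ∈ F j ∧ movedVertex Q v ρ η (j + 1) ∈ F j)
    (hW : W ∈ Q.cells) (hWF : ∀ j, j + 1 < k → W ≠ F j) (hz : z ∈ W) :
    ∃ t < 2 * k, z = interleave (dent ε v) (movedVertex Q v ρ η) t := by
  rcases ConvexQuadrangulation.mem_or_mem_steinerPoints hW hz with hzP | hzS
  · obtain ⟨j, hj, rfl | rfl⟩ := h.exists_lt_and_eq hzP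
    · refine ⟨2 * j + 1, by omega, ?_⟩
      rw [interleave_two_mul_add_one, hQ.movedVertex_eq_of_mem h hF hW hWF hj hz]
    · exact ⟨2 * j, by omega, (interleave_two_mul _ _ j).symm⟩
  · obtain ⟨m, -, hm, hzm, hzm'⟩ := hQ.exists_serves_serves z hzS
    refine ⟨2 * m + 1, by omega, ?_⟩
    rw [interleave_two_mul_add_one, hQ.movedVertex_eq hm hzS hzm hzm']

end DentCells

theorem exists_isPeeled (hQ : IsTight Q k v ρ η) (h : DentedPolygon k P v γ ρ η ε) :
    ∃ x E, IsPeeled Q (2 * k) x E := by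
  have hk := h.four_le
  choose! F hF hleft hright hdent using fun j (hj : j + 1 < k) => hQ.exists_isDentCell h hj
  have hpolygon : AlternatingPolygon (2 * k) (interleave (dent ε v) (movedVertex Q v ρ η)) :=
    h.alternatingPolygon (fun j _ => h.dist_movedVertex_le Q j) hQ.movedVertex_zero
      (hQ.movedVertex_last h) fun j hj => (hdent j hj).orient_neg
  refine ⟨interleave (dent ε v) (movedVertex Q v ρ η), fun a => F (a / 2), hpolygon, ?_,
    fun a _ haN => hF _ (by omega), ?_, ?_, ?_⟩
  · intro t _
    obtain ⟨j, rfl | rfl⟩ := t.even_or_odd'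
    · rw [interleave_two_mul]; exact subset_convexHull ℝ _ (h.dent_mem j)
    · rw [interleave_two_mul_add_one]; exact h.movedVertex_mem_convexHull Q j
  · intro a ha haN
    obtain ⟨j, rfl⟩ : ∃ j, a = 2 * j + 1 := ⟨a / 2, by omega⟩
    rw [show 2 * j + 1 + 1 = 2 * (j + 1) by ring, show 2 * j + 1 + 2 = 2 * (j + 1) + 1 by ring,
      show (2 * j + 1) / 2 = j by omega]
    simpa only [interleave_two_mul, interleave_two_mul_add_one] using hdent j (by omega)
  · rw [show 2 * k - 1 = 2 * (k - 1) + 1 by omega, show 0 = 2 * 0 by rfl,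
      show 1 = 2 * 0 + 1 by rfl]
    simp only [interleave_two_mul, interleave_two_mul_add_one]
    rw [hQ.movedVertex_zero, hQ.movedVertex_last h, Finset.insert_comm, Finset.pair_comm,
      Finset.insert_comm]
    exact hQ.triangle_mem_cells h
  · refine fun W hW hWF z hz => hQ.exists_eq_interleave_of_mem h (fun j hj => ⟨hF j hj, hleft j hj,
      hright j hj, (hdent j hj).left_mem, (hdent j hj).right_mem⟩) hW (fun j hj => ?_) hz
    simpa only [show (2 * j + 1) / 2 = j by omega] using hWF (2 * j + 1) (by omega) (by omega)

end IsTight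

theorem DentedPolygon.exists_not_serves (h : DentedPolygon k P v γ ρ η ε)
    (hcard : 2 * (steinerPoints P Q).card < k) :
    ∃ c, ∀ z ∈ steinerPoints P Q, ¬ Serves v ρ η c z := by
  classical
  by_contra! hserved
  have hle := Finset.card_mul_le_card_mul (s := Finset.range k) (t := steinerPoints P Q)
    (Serves v ρ η) (m := 1) (n := 2)
    (fun i _ => Finset.card_pos.2 (by
      obtain ⟨z, hz, hzi⟩ := hserved i
      exact ⟨z, Finset.mem_filter.2 ⟨hz, hzi⟩⟩))
    fun z hz => h.card_filter_serves_le_two hz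
  rw [Finset.card_range] at hle
  omega

theorem DentedPolygon.le_two_mul_card_steinerPoints (h : DentedPolygon k P v γ ρ η ε)
    (Q : ConvexQuadrangulation P) : k ≤ 2 * (steinerPoints P Q).card := by
  by_contra! hcard
  obtain ⟨c, hc⟩ := h.exists_not_serves hcard
  obtain ⟨x, E, hx⟩ := ((h.shift c).isTight hc hcard).exists_isPeeled (h.shift c)
  exact hx.false

end Peeling

/-! ### Existence of dented polygons -/

section Existence

variable {k : ℕ} {v : ℕ → Pt} {γ : ℝ}

theorem eventually_orient_pos {a b c : Pt} (hpos : 0 < orient a b c) :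
    ∀ᶠ ρ in 𝓝[>] (0 : ℝ), ∀ a' b' c' : Pt, dist a' a ≤ ρ → dist b' b ≤ ρ → dist c' c ≤ ρ →
      0 < orient a' b' c' := by
  have hcont : Continuous fun q : Pt × Pt × Pt => orient q.1 q.2.1 q.2.2 := by
    simp only [orient_eq]; fun_prop
  obtain ⟨δ, hδ, hball⟩ := Metric.eventually_nhds_iff.1
    ((hcont.tendsto (a, b, c)).eventually_const_lt hpos)
  filter_upwards [Ioo_mem_nhdsGT hδ] with ρ hρ a' b' c' ha hb hc
  exact hball (y := (a', b', c')) (max_lt (ha.trans_lt hρ.2)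
    (max_lt (hb.trans_lt hρ.2) (hc.trans_lt hρ.2)))

theorem exists_roundPolygon (hk : 4 ≤ k) (hv : Function.Periodic v k)
    (horient : ∀ {a b c}, a < b → b < c → c < a + k → 0 < orient (v a) (v b) (v c))
    (hdet : ∀ i, 0 < det2 (v i) (v (i + 1))) (hnorm : ∀ i, ‖v i‖ ≤ 1) :
    ∃ γ, RoundPolygon k v γ := by
  have hev : ∀ᶠ γ in 𝓝[>] (0 : ℝ), ∀ i ∈ Finset.range k, γ ≤ det2 (v i) (v (i + 1)) ∧
      ∀ j ∈ Finset.range (i + k), i + 1 < j → γ ≤ edgeHeight v i (v j) := by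
    simp only [eventually_all_finset, eventually_and, eventually_imp_distrib_left]
    have hle {x : ℝ} (hx : 0 < x) : ∀ᶠ γ in 𝓝[>] (0 : ℝ), γ ≤ x := by
      filter_upwards [Ioc_mem_nhdsGT hx] with γ hγ using hγ.2
    exact fun i _ => ⟨hle (hdet i), fun j hj hij =>
      hle (horient i.lt_succ_self hij (Finset.mem_range.1 hj))⟩
  obtain ⟨γ, hγ, hpos⟩ := (hev.and eventually_mem_nhdsWithin).exists
  have hshift := apply_add_eq_apply_mod_add hv
  have hmod (i : ℕ) : i % k ∈ Finset.range k := Finset.mem_range.2 (Nat.mod_lt i (by omega))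
  refine ⟨γ, hk, hv, horient, hpos, fun {i j} hij hji => ?_, fun i => ?_, hnorm⟩
  · obtain ⟨l, rfl⟩ := Nat.exists_eq_add_of_le (show i ≤ j by omega)
    rw [edgeHeight, hshift i 1, hshift i l, ← hv.map_mod_nat i]
    exact (hγ _ (hmod i)).2 _ (Finset.mem_range.2 (by omega)) (by omega)
  · rw [hshift i 1, ← hv.map_mod_nat i]
    exact (hγ _ (hmod i)).1

namespace RoundPolygon

theorem eventually_orient_pos_of_dist_le (h : RoundPolygon k v γ) :
    ∀ᶠ ρ in 𝓝[>] (0 : ℝ), ∀ (c : ℕ) (x : ℕ → Pt),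
      (∀ t < 2 * k, dist (x t) (idealCycle (fun j => v (c + j)) t) ≤ ρ) → ∀ {a b d}, a < b →
        b < d → d < 2 * k → ¬ IsReflexTriple (2 * k) a b d → 0 < orient (x a) (x b) (x d) := by
  have hev : ∀ᶠ ρ in 𝓝[>] (0 : ℝ), ∀ c ∈ Finset.range k, ∀ d ∈ Finset.range (2 * k),
      ∀ b ∈ Finset.range d, ∀ a ∈ Finset.range b, ¬ IsReflexTriple (2 * k) a b d →
        ∀ x y z : Pt, dist x (idealCycle (fun j => v (c + j)) a) ≤ ρ →
          dist y (idealCycle (fun j => v (c + j)) b) ≤ ρ →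
          dist z (idealCycle (fun j => v (c + j)) d) ≤ ρ → 0 < orient x y z := by
    simp only [eventually_all_finset, eventually_imp_distrib_left]
    exact fun c _ d hd b hbd a hab habd => eventually_orient_pos ((h.shift c).orient_idealCycle_pos
      (Finset.mem_range.1 hab) (Finset.mem_range.1 hbd) (Finset.mem_range.1 hd) habd)
  filter_upwards [hev] with ρ hρ c x hx a b d hab hbd hd habd
  have hc : (fun j => v (c + j)) = fun j => v (c % k + j) :=
    funext fun j => apply_add_eq_apply_mod_add h.periodic c j
  rw [hc] at hx
  simp only [Finset.mem_range] at hρ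
  exact hρ (c % k) (Nat.mod_lt c (by linarith [h.four_le])) d hd b hbd a hab habd _ _ _
    (hx a (by omega)) (hx b (by omega)) (hx d hd)

theorem exists_dentedPolygon (h : RoundPolygon k v γ) :
    ∃ P ρ η ε, DentedPolygon k P v γ ρ η ε := by
  have hγ := h.pos
  obtain ⟨ρ, horient, hρ, hργ⟩ := (h.eventually_orient_pos_of_dist_le.and
    (Ioc_mem_nhdsGT (show 0 < γ / 8 by positivity))).exists
  have hfinite {f : ℕ → Pt} (hf : Function.Periodic f k) : (Set.range f).Finite :=
    ((Set.finite_Ico 0 (0 + k)).image f).subset fun _ ⟨j, hj⟩ => by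
      obtain ⟨m, hm, hmj⟩ := exists_mem_Ico_of_periodic hf (by linarith [h.four_le]) 0 j
      exact ⟨m, hm, hmj.trans hj⟩
  have hη : 0 < ρ * γ / 8 := by positivity
  exact ⟨((hfinite h.periodic).union (hfinite h.periodic_dent)).toFinset, ρ, ρ * γ / 8,
    γ * (ρ * γ / 8) / 64, h, hρ, hργ, hη, le_rfl, by positivity, by nlinarith [mul_pos hγ hη],
    Set.Finite.coe_toFinset _, horient⟩

end RoundPolygon

/-- The vertices of the regular `k`-gon inscribed in the unit circle. -/
noncomputable def regularPolygon (k : ℕ) (j : ℕ) : Pt :=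
  (Real.cos (2 * (j * (Real.pi / k))), Real.sin (2 * (j * (Real.pi / k))))

theorem sin_two_mul_add_sin_two_mul_sub (x y : ℝ) :
    Real.sin (2 * x) + Real.sin (2 * y) - Real.sin (2 * (x + y)) =
      4 * Real.sin x * Real.sin y * Real.sin (x + y) := by
  rw [Real.sin_two_mul, Real.sin_two_mul, Real.sin_two_mul, Real.sin_add, Real.cos_add]
  linear_combination -2 * Real.sin y * Real.cos y * Real.sin_sq_add_cos_sq x -
    2 * Real.sin x * Real.cos x * Real.sin_sq_add_cos_sq y

theorem orient_regularPolygon (k a b c : ℕ) :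
    orient (regularPolygon k a) (regularPolygon k b) (regularPolygon k c) =
      4 * Real.sin ((b - a) * (Real.pi / k)) * Real.sin ((c - b) * (Real.pi / k)) *
        Real.sin ((c - a) * (Real.pi / k)) := by
  have hac : ((c : ℝ) - a) * (Real.pi / k) = (b - a) * (Real.pi / k) + (c - b) * (Real.pi / k) := by
    ring
  rw [hac, ← sin_two_mul_add_sin_two_mul_sub, ← hac]
  simp only [orient_eq, regularPolygon, sub_mul, mul_sub, Real.sin_sub]
  ring

theorem periodic_regularPolygon (hk : k ≠ 0) : Function.Periodic (regularPolygon k) k := fun j => by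
  have hangle :
      2 * (((j + k : ℕ) : ℝ) * (Real.pi / k)) = 2 * (j * (Real.pi / k)) + 2 * Real.pi := by
    push_cast; field_simp
  rw [regularPolygon, regularPolygon, hangle, Real.cos_add_two_pi, Real.sin_add_two_pi]

theorem det2_regularPolygon_succ (k i : ℕ) :
    det2 (regularPolygon k i) (regularPolygon k (i + 1)) = Real.sin (2 * (Real.pi / k)) := by
  rw [show 2 * (Real.pi / k) = 2 * (((i + 1 : ℕ) : ℝ) * (Real.pi / k)) - 2 * (i * (Real.pi / k)) by
    push_cast; ring, Real.sin_sub]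
  simp only [det2, regularPolygon]
  ring

theorem sin_mul_pi_div_pos {t : ℝ} (ht : 0 < t) (htk : t < k) :
    0 < Real.sin (t * (Real.pi / k)) := by
  have hk : (0 : ℝ) < k := ht.trans htk
  refine Real.sin_pos_of_pos_of_lt_pi (by positivity) ?_
  calc t * (Real.pi / k) < k * (Real.pi / k) := by gcongr
    _ = Real.pi := mul_div_cancel₀ _ hk.ne'

theorem exists_roundPolygon_regularPolygon (hk : 4 ≤ k) :
    ∃ γ, RoundPolygon k (regularPolygon k) γ := by
  refine exists_roundPolygon hk (periodic_regularPolygon (by omega)) (fun {a b c} hab hbc hca => ?_)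
    (fun i => ?_) fun i => max_le (Real.abs_cos_le_one _) (Real.abs_sin_le_one _)
  · have hab' : (a : ℝ) < b := mod_cast hab
    have hbc' : (b : ℝ) < c := mod_cast hbc
    have hca' : (c : ℝ) < a + k := mod_cast hca
    have := sin_mul_pi_div_pos (k := k) (t := b - a) (by linarith) (by linarith)
    have := sin_mul_pi_div_pos (k := k) (t := c - b) (by linarith) (by linarith)
    have := sin_mul_pi_div_pos (k := k) (t := c - a) (by linarith) (by linarith)
    rw [orient_regularPolygon]
    positivity
  · rw [det2_regularPolygon_succ]
    exact sin_mul_pi_div_pos two_pos (mod_cast (by omega : 2 < k))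

end Existence

/-- For every even `n = 2k ≥ 8` there is a set `P` of `n` points in general position
(no three collinear) such that every strictly convex quadrangulation of `P` uses at
least `n/4` Steiner points. -/
theorem exists_pointset_needing_quarter_n_steiner_points :
    ∀ k : ℕ, 4 ≤ k →
      ∃ P : Finset Pt, P.card = 2 * k ∧
        (∀ p ∈ P, ∀ q ∈ P, ∀ r ∈ P, p ≠ q → p ≠ r → q ≠ r →
          det2 (q - p) (r - p) ≠ 0) ∧
        ∀ Q : ConvexQuadrangulation P,
          ((2 * k : ℝ) / 4) ≤ ((steinerPoints P Q).card : ℝ) := by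
  intro k hk
  obtain ⟨γ, hround⟩ := exists_roundPolygon_regularPolygon hk
  obtain ⟨P, ρ, η, ε, h⟩ := hround.exists_dentedPolygon
  refine ⟨P, h.card_eq, fun p hp q hq r hr => h.generalPosition hp hq hr, fun Q => ?_⟩
  have hle : (k : ℝ) ≤ 2 * (steinerPoints P Q).card := mod_cast h.le_two_mul_card_steinerPoints Q
  linarith
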